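/- arXiv:2201.07608 — 4 statements merged into one kernel-verified Lean document; each statement's English description precedes it below -/
import Mathlib

section
/- Let η : ℝ → (0,∞) be C¹ and 1-periodic, and let v : closure(Ω_η) → ℝ² be C², 1-periodic in x, divergence-free (∂ₓv₁ + ∂_z v₂ = 0 on Ω_η), with v(x,0) = 0 and with purely vertical trace on the top boundary, i.e. v₁(x, η(x)) = 0 for all x. Then ∫_{Ω_η} |∇v|² dx dz = 2·∫_{Ω_η} |D(v)|² dx dz, where D(v) = (∇v + (∇v)ᵀ)/2 is the symmetric part of the gradient and |·| denotes the Frobenius norm. -/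
open MeasureTheory Set

lemma region_integral (η : ℝ → ℝ) (hη : Continuous η) (hpos : ∀ x, 0 < η x)
    (g : ℝ × ℝ → ℝ) (hg : Continuous g) :
    IntegrableOn g {p : ℝ × ℝ | p.1 ∈ Ioo (0:ℝ) 1 ∧ p.2 ∈ Ioo 0 (η p.1)} ∧
    ∫ p in {p : ℝ × ℝ | p.1 ∈ Ioo (0:ℝ) 1 ∧ p.2 ∈ Ioo 0 (η p.1)}, g p
      = ∫ x in (0:ℝ)..1, ∫ z in (0:ℝ)..(η x), g (x, z) := by
  set S : Set (ℝ × ℝ) := {p : ℝ × ℝ | p.1 ∈ Ioo (0:ℝ) 1 ∧ p.2 ∈ Ioo 0 (η p.1)} with hS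
  obtain ⟨M, hM⟩ := (isCompact_Icc (a := (0:ℝ)) (b := 1)).bddAbove_image hη.continuousOn
  have hsub : S ⊆ Icc (0:ℝ) 1 ×ˢ Icc (0:ℝ) M := by
    rintro ⟨x, z⟩ ⟨h1, h2⟩
    exact ⟨Ioo_subset_Icc_self h1, h2.1.le,
      h2.2.le.trans (hM (mem_image_of_mem η (Ioo_subset_Icc_self h1)))⟩
  have hmeas : MeasurableSet S :=
    measurableSet_regionBetween (f := fun _ => (0:ℝ)) measurable_const hη.measurable
      measurableSet_Ioo
  have hint : IntegrableOn g S :=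
    (hg.continuousOn.integrableOn_compact (isCompact_Icc.prod isCompact_Icc)).mono_set hsub
  refine ⟨hint, ?_⟩
  rw [← integral_indicator hmeas]
  have h2 : Integrable (S.indicator g) (volume.prod volume) := by
    rw [← Measure.volume_eq_prod]; exact (integrable_indicator_iff hmeas).2 hint
  rw [Measure.volume_eq_prod, integral_prod _ h2, intervalIntegral.integral_of_le zero_le_one,
    integral_Ioc_eq_integral_Ioo, ← integral_indicator measurableSet_Ioo]
  congr 1
  ext x
  by_cases hx : x ∈ Ioo (0:ℝ) 1
  · rw [indicator_of_mem hx, intervalIntegral.integral_of_le (hpos x).le,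
      integral_Ioc_eq_integral_Ioo, ← integral_indicator measurableSet_Ioo]
    congr 1
    ext z
    by_cases hz : z ∈ Ioo 0 (η x)
    · rw [indicator_of_mem hz, indicator_of_mem (show (x, z) ∈ S from ⟨hx, hz⟩)]
    · rw [indicator_of_notMem hz, indicator_of_notMem (fun h : (x, z) ∈ S => hz h.2)]
  · rw [indicator_of_notMem hx]
    have : ∀ z, S.indicator g (x, z) = 0 := fun z =>
      indicator_of_notMem (fun h : (x, z) ∈ S => hx h.1) _
    simp [this]

lemma div_integral (η : ℝ → ℝ) (hη : ContDiff ℝ 1 η) (hper : η 1 = η 0)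
    (F G : ℝ × ℝ → ℝ) (hF : ContDiff ℝ 1 F) (hG : ContDiff ℝ 1 G)
    (hFper : ∀ z, F (1, z) = F (0, z)) (hFtop : ∀ x, F (x, η x) = 0)
    (hGtop : ∀ x, G (x, η x) = 0) (hGbot : ∀ x, G (x, 0) = 0) :
    ∫ x in (0:ℝ)..1, ∫ z in (0:ℝ)..(η x),
      (fderiv ℝ F (x, z) (1, 0) - fderiv ℝ G (x, z) (0, 1)) = 0 := by
  have hη' : Continuous (deriv η) := hη.continuous_deriv le_rfl
  have hηc : Continuous η := hη.continuous
  have hFc := hF.continuous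
  have hF' : Continuous (fderiv ℝ F) := hF.continuous_fderiv (by norm_num)
  have hG' : Continuous (fderiv ℝ G) := hG.continuous_fderiv (by norm_num)
  let Hx : ℝ → ℝ → ℝ := fun x s => deriv η x * F (x, η x * s) +
    η x * (fderiv ℝ F (x, η x * s) (1, 0) + deriv η x * s * fderiv ℝ F (x, η x * s) (0, 1))
  let Ks : ℝ → ℝ → ℝ := fun x s => deriv η x * F (x, η x * s) +
    s * deriv η x * (η x * fderiv ℝ F (x, η x * s) (0, 1))
  have hHx : ∀ x s, HasDerivAt (fun x => η x * F (x, η x * s)) (Hx x s) x := by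
    intro x s
    have h1 : HasDerivAt η (deriv η x) x := (hη.differentiable (by norm_num) x).hasDerivAt
    have h2 : HasDerivAt (fun x => F (x, η x * s))
        (fderiv ℝ F (x, η x * s) (1, deriv η x * s)) x :=
      ((hF.differentiable (by norm_num) (x, η x * s)).hasFDerivAt).comp_hasDerivAt x
        ((hasDerivAt_id x).prodMk (h1.mul_const s))
    have e : deriv η x * F (x, η x * s) + η x * fderiv ℝ F (x, η x * s) (1, deriv η x * s)
        = Hx x s := by
      have : ((1:ℝ), deriv η x * s) = (1, 0) + (deriv η x * s) • ((0:ℝ), (1:ℝ)) := by simp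
      rw [this, map_add, map_smul]; simp [Hx]
    rw [← e]
    exact h1.mul h2
  have hvert : ∀ (f : ℝ × ℝ → ℝ), ContDiff ℝ 1 f → ∀ x s,
      HasDerivAt (fun s => f (x, η x * s)) (η x * fderiv ℝ f (x, η x * s) (0, 1)) s := by
    intro f hf x s
    have h2 : HasDerivAt (fun s => f (x, η x * s))
        (fderiv ℝ f (x, η x * s) (0, η x * 1)) s :=
      ((hf.differentiable (by norm_num) (x, η x * s)).hasFDerivAt).comp_hasDerivAt s
        ((hasDerivAt_const s x).prodMk ((hasDerivAt_id s).const_mul (η x)))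
    have : ((0:ℝ), η x * 1) = (η x) • ((0:ℝ), (1:ℝ)) := by simp
    rw [this, map_smul] at h2
    exact h2
  have hHxc : Continuous (Function.uncurry Hx) := by
    simp only [Hx, Function.uncurry_def]; fun_prop
  have hHx0 : ∫ x in (0:ℝ)..1, ∫ s in (0:ℝ)..1, Hx x s = 0 := by
    have hint : Integrable (Function.uncurry Hx)
        ((volume.restrict (Ioc (0:ℝ) 1)).prod (volume.restrict (Ioc (0:ℝ) 1))) := by
      rw [Measure.prod_restrict, ← Measure.volume_eq_prod, ← IntegrableOn]
      exact (hHxc.continuousOn.integrableOn_compact (isCompact_Icc.prod isCompact_Icc)).mono_set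
        (prod_mono Ioc_subset_Icc_self Ioc_subset_Icc_self)
    have hsw := integral_integral_swap hint
    simp only [← intervalIntegral.integral_of_le (zero_le_one (α := ℝ))] at hsw
    rw [hsw]
    · have : ∀ s, ∫ x in (0:ℝ)..1, Hx x s = 0 := by
        intro s
        rw [intervalIntegral.integral_eq_sub_of_hasDerivAt (fun x _ => hHx x s)
          (Continuous.intervalIntegrable (by fun_prop) _ _)]
        rw [hper, hFper, sub_self]
      simp [this]
  refine Eq.trans ?_ hHx0
  refine intervalIntegral.integral_congr (fun x _ => ?_)
  beta_reduce
  have hK : ∫ s in (0:ℝ)..1, Ks x s = 0 := by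
    rw [intervalIntegral.integral_eq_sub_of_hasDerivAt
      (f := fun s => s * deriv η x * F (x, η x * s)) (fun s _ => ?_)
          (Continuous.intervalIntegrable (by simp only [Ks]; fun_prop) _ _)]
    · simp [hFtop]
    · have e : 1 * deriv η x * F (x, η x * s)
          + s * deriv η x * (η x * fderiv ℝ F (x, η x * s) (0, 1)) = Ks x s := by
        simp [Ks]
      rw [← e]
      exact ((hasDerivAt_id s).mul_const (deriv η x)).mul (hvert F hF x s)
  have hL : ∫ s in (0:ℝ)..1, η x * fderiv ℝ G (x, η x * s) (0, 1) = 0 := by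
    rw [intervalIntegral.integral_eq_sub_of_hasDerivAt (fun s _ => hvert G hG x s)
          (Continuous.intervalIntegrable (by fun_prop) _ _)]
    simp [hGtop, hGbot]
  have hch := intervalIntegral.mul_integral_comp_mul_left (a := 0) (b := 1) (η x)
    (f := fun z => fderiv ℝ F (x, z) (1, 0) - fderiv ℝ G (x, z) (0, 1))
  rw [mul_zero, mul_one] at hch
  rw [← hch, ← intervalIntegral.integral_const_mul]
  have e : ∀ s, η x * (fderiv ℝ F (x, η x * s) (1, 0) - fderiv ℝ G (x, η x * s) (0, 1))
      = Hx x s - Ks x s - η x * fderiv ℝ G (x, η x * s) (0, 1) := by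
    intro s; simp only [Hx, Ks]; ring
  simp only [e]
  rw [intervalIntegral.integral_sub, intervalIntegral.integral_sub, hK, hL]
  · simp
  all_goals exact Continuous.intervalIntegrable (by first | fun_prop | (simp only [Hx, Ks]; fun_prop)) _ _

/-- Korn equality (2.3).
For a C¹, 1-periodic, positive height function `η` and a C² divergence-free velocity field
`v = (v₁, v₂)`, 1-periodic in `x`, vanishing on the bottom boundary and with purely vertical
trace on the top boundary `z = η x` (i.e. `v₁(x, η x) = 0`), one has
`∫_{Ω_η} |∇v|² = 2 ∫_{Ω_η} |D(v)|²`, where `D(v)` is the symmetric gradient and `|·|`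
is the Frobenius norm. -/
theorem stmt_2 (η : ℝ → ℝ) (hη : ContDiff ℝ 1 η) (hper : ∀ x, η (x + 1) = η x)
    (hpos : ∀ x, 0 < η x)
    (v1 v2 : ℝ × ℝ → ℝ) (hv1 : ContDiff ℝ 2 v1) (hv2 : ContDiff ℝ 2 v2)
    (hvper : ∀ x z, v1 (x + 1, z) = v1 (x, z) ∧ v2 (x + 1, z) = v2 (x, z))
    (hdiv : ∀ p : ℝ × ℝ, p.1 ∈ Ioo (0:ℝ) 1 → p.2 ∈ Ioo 0 (η p.1) →
      fderiv ℝ v1 p (1, 0) + fderiv ℝ v2 p (0, 1) = 0)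
    (hbot : ∀ x, v1 (x, 0) = 0 ∧ v2 (x, 0) = 0)
    (htop : ∀ x, v1 (x, η x) = 0) :
    (∫ p in {p : ℝ × ℝ | p.1 ∈ Ioo (0:ℝ) 1 ∧ p.2 ∈ Ioo 0 (η p.1)},
        ((fderiv ℝ v1 p (1, 0)) ^ 2 + (fderiv ℝ v1 p (0, 1)) ^ 2
          + (fderiv ℝ v2 p (1, 0)) ^ 2 + (fderiv ℝ v2 p (0, 1)) ^ 2))
      = 2 * ∫ p in {p : ℝ × ℝ | p.1 ∈ Ioo (0:ℝ) 1 ∧ p.2 ∈ Ioo 0 (η p.1)},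
        ((fderiv ℝ v1 p (1, 0)) ^ 2 + (fderiv ℝ v2 p (0, 1)) ^ 2
          + 2 * (((fderiv ℝ v1 p (0, 1) + fderiv ℝ v2 p (1, 0)) / 2) ^ 2)) := by
  have hηc := hη.continuous
  have h1c : Continuous (fderiv ℝ v1) := hv1.continuous_fderiv (by norm_num)
  have h2c : Continuous (fderiv ℝ v2) := hv2.continuous_fderiv (by norm_num)
  have hd2 : ContDiff ℝ 1 (fderiv ℝ v2) := hv2.fderiv_right (by norm_num)
  have hv1' : ContDiff ℝ 1 v1 := hv1.of_le (by norm_num)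
  have hp2 : ∀ z, fderiv ℝ v2 (1, z) = fderiv ℝ v2 (0, z) := by
    intro z
    have hf : (fun p : ℝ × ℝ => v2 (p + (1, 0))) = v2 := by
      ext ⟨x, z⟩; simpa using (hvper x z).2
    have := fderiv_comp_add_right (𝕜 := ℝ) (f := v2) (x := ((0:ℝ), z)) ((1:ℝ), (0:ℝ))
    rw [hf] at this
    rw [this]; simp
  have hp1 : ∀ z, v1 (1, z) = v1 (0, z) := fun z => by simpa using (hvper 0 z).1
  have hdivI := div_integral η hη (by simpa using hper 0)
    (fun p => v1 p * fderiv ℝ v2 p (0, 1)) (fun p => v1 p * fderiv ℝ v2 p (1, 0))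
    (hv1'.mul (hd2.clm_apply contDiff_const)) (hv1'.mul (hd2.clm_apply contDiff_const))
    (fun z => by simp only [hp1, hp2]) (fun x => by simp [htop]) (fun x => by simp [htop])
    (fun x => by simp [hbot])
  have hprod : ∀ (p w u : ℝ × ℝ), fderiv ℝ (fun p => v1 p * fderiv ℝ v2 p w) p u
      = fderiv ℝ v1 p u * fderiv ℝ v2 p w + v1 p * fderiv ℝ (fderiv ℝ v2) p u w := by
    intro p w u
    have a1 : HasFDerivAt v1 (fderiv ℝ v1 p) p :=
      (hv1'.differentiable (by norm_num) p).hasFDerivAt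
    have a2 : HasFDerivAt (fderiv ℝ v2) (fderiv ℝ (fderiv ℝ v2) p) p :=
      (hd2.differentiable (by norm_num) p).hasFDerivAt
    have a3 : fderiv ℝ (fun p => v1 p * fderiv ℝ v2 p w) p = _ :=
      (a1.mul (a2.clm_apply (hasFDerivAt_const w p))).fderiv
    rw [a3]
    simp; ring
  have hsymm : ∀ p : ℝ × ℝ, fderiv ℝ (fderiv ℝ v2) p (1, 0) (0, 1)
      = fderiv ℝ (fderiv ℝ v2) p (0, 1) (1, 0) := fun p =>
    (hv2.contDiffAt (x := p)).isSymmSndFDerivAt (by simp) _ _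
  simp only [hprod, hsymm, add_sub_add_right_eq_sub] at hdivI
  obtain ⟨i1, e1⟩ := region_integral η hηc hpos
    (fun p => fderiv ℝ v1 p (1, 0) * fderiv ℝ v2 p (0, 1)
      - fderiv ℝ v1 p (0, 1) * fderiv ℝ v2 p (1, 0)) (by fun_prop)
  obtain ⟨i2, -⟩ := region_integral η hηc hpos
    (fun p => (fderiv ℝ v1 p (1, 0)) ^ 2 + (fderiv ℝ v2 p (0, 1)) ^ 2
          + 2 * (((fderiv ℝ v1 p (0, 1) + fderiv ℝ v2 p (1, 0)) / 2) ^ 2)) (by fun_prop)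
  rw [hdivI] at e1
  have hmeas : MeasurableSet {p : ℝ × ℝ | p.1 ∈ Ioo (0:ℝ) 1 ∧ p.2 ∈ Ioo 0 (η p.1)} :=
    measurableSet_regionBetween (f := fun _ => (0:ℝ)) measurable_const hηc.measurable
      measurableSet_Ioo
  rw [← integral_const_mul]
  have key := integral_add (i2.integrable.const_mul 2) (i1.integrable.const_mul 2)
  rw [integral_const_mul 2 (fun p : ℝ × ℝ => fderiv ℝ v1 p (1, 0) * fderiv ℝ v2 p (0, 1)
      - fderiv ℝ v1 p (0, 1) * fderiv ℝ v2 p (1, 0)), e1, mul_zero, add_zero] at key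
  rw [← key]
  refine setIntegral_congr_fun hmeas ?_
  rintro p ⟨hx, hz⟩
  have hd : fderiv ℝ v2 p (0, 1) = - fderiv ℝ v1 p (1, 0) := by linarith [hdiv p hx hz]
  simp only [hd]
  ring
end

section
/- Let r ∈ [1,3], let ϱ̂, δ̂, β̂ > 0, let η₀ : ℝ → (0,∞) be a 1-periodic C⁴ function, and let C_f > 0, T > 0. Then there exist constants C > 0 and ε₀ ∈ (0,1] such that for every ε ∈ (0,ε₀] the following holds: if (v, p, η) is a classical solution of the FSI problem on the time interval [0, ε⁻²T] with coefficients ϱ = ϱ̂·ε, δ = δ̂·ε⁻ʳ, β = β̂·ε⁻¹, initial displacement ε·η₀, and force f with sup|f| ≤ C_f, then for every t ∈ (0, ε⁻²T): (1/2)·‖v(t)‖²_{L²(Ω_η(t))} + (1/2)·∫₀ᵗ ‖∇v‖²_{L²(Ω_η(s))} ds + (ϱ̂ε/2)·‖∂_tη(t)‖²_{L²(0,1)} + δ̂·ε⁻ʳ·∫₀ᵗ ‖∂_t∂ₓη(s)‖²_{L²(0,1)} ds + (β̂/(2ε))·‖∂ₓ²η(t)‖²_{L²(0,1)} ≤ C·ε.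 -/
open MeasureTheory Set intervalIntegral

noncomputable section

/-- Partial derivative in the `x` direction of a field on `ℝ×ℝ×ℝ` (variables `(x,z,t)`). -/
def dX (f : ℝ × ℝ × ℝ → ℝ) (q : ℝ × ℝ × ℝ) : ℝ := fderiv ℝ f q (1, 0, 0)

/-- Partial derivative in the `z` direction. -/
def dZ (f : ℝ × ℝ × ℝ → ℝ) (q : ℝ × ℝ × ℝ) : ℝ := fderiv ℝ f q (0, 1, 0)

/-- Partial derivative in the `t` direction. -/
def dT (f : ℝ × ℝ × ℝ → ℝ) (q : ℝ × ℝ × ℝ) : ℝ := fderiv ℝ f q (0, 0, 1)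

/-- Partial derivative in `x` of a field on `ℝ×ℝ` (variables `(x,t)`). -/
def eX (f : ℝ × ℝ → ℝ) (q : ℝ × ℝ) : ℝ := fderiv ℝ f q (1, 0)

/-- Partial derivative in `t` of a field on `ℝ×ℝ` (variables `(x,t)`). -/
def eT (f : ℝ × ℝ → ℝ) (q : ℝ × ℝ) : ℝ := fderiv ℝ f q (0, 1)

/-- A classical solution `(v, p, η)` of the nonlinear FSI problem (1.2)–(1.5) on `[0,T]`
with coefficients `ϱ, δ, β`, force `f = (f1, f2)` and initial displacement `η0`:
all fields are smooth and 1-periodic in `x`; the incompressible Navier–Stokes equations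
(with Cauchy stress `σ(v,p) = 2D(v) − p·I`) hold on the moving subgraph domain
`Ω_η(t) = {0 < z < η(x,t)}`; the visco-elastic plate equation
`ϱ ∂ₜₜη − δ ∂ₓ²∂ₜη + β ∂ₓ⁴η = −(σ(v,p)(−∂ₓη,1)ᵀ)·e_z` (right side evaluated at
`(x, η(x,t), t)`) holds; the kinematic condition `v(x,η(x,t),t) = (0, ∂ₜη)` and the
no-slip condition `v(x,0,t) = 0` hold; and the initial conditions are
`v(·,0) = 0`, `∂ₜη(·,0) = 0`, `η(·,0) = η0 > 0`. -/
structure IsClassicalFSISolution (ϱ δ β T : ℝ)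
    (f1 f2 : ℝ × ℝ × ℝ → ℝ) (v1 v2 pr : ℝ × ℝ × ℝ → ℝ)
    (η : ℝ × ℝ → ℝ) (η0 : ℝ → ℝ) : Prop where
  smooth_v1 : ContDiff ℝ (⊤ : ℕ∞) v1
  smooth_v2 : ContDiff ℝ (⊤ : ℕ∞) v2
  smooth_pr : ContDiff ℝ (⊤ : ℕ∞) pr
  smooth_η : ContDiff ℝ (⊤ : ℕ∞) η
  periodic_v1 : ∀ x z t, v1 (x + 1, z, t) = v1 (x, z, t)
  periodic_v2 : ∀ x z t, v2 (x + 1, z, t) = v2 (x, z, t)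
  periodic_pr : ∀ x z t, pr (x + 1, z, t) = pr (x, z, t)
  periodic_η : ∀ x t, η (x + 1, t) = η (x, t)
  η_pos : ∀ x, ∀ t ∈ Icc (0:ℝ) T, 0 < η (x, t)
  momentum_1 : ∀ x z t, t ∈ Ioo (0:ℝ) T → z ∈ Ioo 0 (η (x, t)) →
    dT v1 (x, z, t) + v1 (x, z, t) * dX v1 (x, z, t) + v2 (x, z, t) * dZ v1 (x, z, t)
      - (dX (fun q => 2 * dX v1 q - pr q) (x, z, t)
          + dZ (fun q => dZ v1 q + dX v2 q) (x, z, t))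
      = f1 (x, z, t)
  momentum_2 : ∀ x z t, t ∈ Ioo (0:ℝ) T → z ∈ Ioo 0 (η (x, t)) →
    dT v2 (x, z, t) + v1 (x, z, t) * dX v2 (x, z, t) + v2 (x, z, t) * dZ v2 (x, z, t)
      - (dX (fun q => dZ v1 q + dX v2 q) (x, z, t)
          + dZ (fun q => 2 * dZ v2 q - pr q) (x, z, t))
      = f2 (x, z, t)
  incompressible : ∀ x z t, t ∈ Ioo (0:ℝ) T → z ∈ Ioo 0 (η (x, t)) →
    dX v1 (x, z, t) + dZ v2 (x, z, t) = 0
  plate : ∀ x : ℝ, ∀ t ∈ Ioo (0:ℝ) T,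
    ϱ * eT (eT η) (x, t) - δ * eX (eX (eT η)) (x, t)
        + β * eX (eX (eX (eX η))) (x, t)
      = -(((dZ v1 (x, η (x, t), t) + dX v2 (x, η (x, t), t)) * (-(eX η (x, t))))
          + (2 * dZ v2 (x, η (x, t), t) - pr (x, η (x, t), t)))
  kinematic_1 : ∀ x : ℝ, ∀ t ∈ Icc (0:ℝ) T, v1 (x, η (x, t), t) = 0
  kinematic_2 : ∀ x : ℝ, ∀ t ∈ Icc (0:ℝ) T, v2 (x, η (x, t), t) = eT η (x, t)
  noslip : ∀ x : ℝ, ∀ t ∈ Icc (0:ℝ) T, v1 (x, 0, t) = 0 ∧ v2 (x, 0, t) = 0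
  init_v : ∀ x z : ℝ, v1 (x, z, 0) = 0 ∧ v2 (x, z, 0) = 0
  init_ηt : ∀ x : ℝ, eT η (x, 0) = 0
  init_η : ∀ x : ℝ, η (x, 0) = η0 x
  init_η_pos : ∀ x : ℝ, 0 < η0 x

section helpers
open Function Filter Topology

/-- the derivative under an integral over a fixed compact interval -/
lemma hasDerivAt_param (F F' : ℝ → ℝ → ℝ) (hF : Continuous (uncurry F))
    (hF' : Continuous (uncurry F')) (h : ∀ s z, HasDerivAt (fun σ => F σ z) (F' s z) s)
    (a b s : ℝ) :
    HasDerivAt (fun σ => ∫ z in a..b, F σ z) (∫ z in a..b, F' s z) s := by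
  have hc : IsCompact (Icc (s - 1) (s + 1) ×ˢ uIcc a b) := isCompact_Icc.prod isCompact_uIcc
  obtain ⟨C, hC⟩ := hc.exists_bound_of_continuousOn hF'.continuousOn
  have hFs : ∀ s, Continuous (F s) := fun s => hF.comp (Continuous.prodMk_right s)
  have hF's : ∀ s, Continuous (F' s) := fun s => hF'.comp (Continuous.prodMk_right s)
  refine (intervalIntegral.hasDerivAt_integral_of_dominated_loc_of_deriv_le
    (bound := fun _ => C) (Icc_mem_nhds (by linarith : s - 1 < s) (by linarith : s < s + 1))
    (Eventually.of_forall fun x => (hFs x).aestronglyMeasurable)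
    ((hFs s).intervalIntegrable _ _) (hF's s).aestronglyMeasurable ?_ (by simp) ?_).2
  · refine Eventually.of_forall fun z hz x hx => ?_
    exact hC (x, z) ⟨hx, uIoc_subset_uIcc hz⟩
  · exact Eventually.of_forall fun z hz x hx => h x z

/-- the Leibniz rule with a moving endpoint -/
lemma leibniz (F : ℝ × ℝ → ℝ) (hF : ContDiff ℝ (⊤ : ℕ∞) F) (a : ℝ → ℝ)
    (ha : ContDiff ℝ (⊤ : ℕ∞) a) (s : ℝ) :
    HasDerivAt (fun σ => ∫ z in (0:ℝ)..a σ, F (σ, z))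
      ((∫ z in (0:ℝ)..a s, eX F (s, z)) + deriv a s * F (s, a s)) s := by
  have hfd : ∀ q, HasFDerivAt F (fderiv ℝ F q) q := fun q =>
    (hF.differentiable (by simp) q).hasFDerivAt
  have had : ∀ s, HasDerivAt a (deriv a s) s := fun s => (ha.differentiable (by simp) s).hasDerivAt
  have cF : Continuous F := hF.continuous
  have cfd : Continuous (fderiv ℝ F) := hF.continuous_fderiv (by simp)
  have cX : Continuous (eX F) := by unfold eX; fun_prop
  have cT : Continuous (eT F) := by unfold eT; fun_prop
  have ca : Continuous a := ha.continuous
  have cda : Continuous (deriv a) := ha.continuous_deriv (by simp)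
  have hlin : ∀ q (u w : ℝ), fderiv ℝ F q (u, w) = u * eX F q + w * eT F q := by
    intro q u w
    have : ((u, w) : ℝ × ℝ) = u • (1, 0) + w • (0, 1) := by simp
    rw [this, map_add, map_smul, map_smul]; rfl
  have hsub : ∀ σ, (∫ z in (0:ℝ)..a σ, F (σ, z)) = ∫ y in (0:ℝ)..1, a σ * F (σ, a σ * y) := by
    intro σ
    rw [intervalIntegral.integral_const_mul,
      intervalIntegral.mul_integral_comp_mul_left (f := fun z => F (σ, z))]
    simp
  have key := hasDerivAt_param (fun σ y => a σ * F (σ, a σ * y))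
    (fun σ y => deriv a σ * F (σ, a σ * y) + a σ * (eX F (σ, a σ * y)
      + deriv a σ * y * eT F (σ, a σ * y)))
    (by unfold uncurry; fun_prop) (by unfold uncurry; fun_prop) (by
      intro σ y
      have h1 : HasDerivAt (fun σ => (σ, a σ * y)) (1, deriv a σ * y) σ :=
        (hasDerivAt_id σ).prodMk ((had σ).mul_const y)
      have h2 := (hfd (σ, a σ * y)).comp_hasDerivAt σ h1
      rw [hlin] at h2
      exact ((had σ).mul h2).congr_deriv (by simp)) 0 1 s
  simp_rw [hsub]
  convert key using 1
  have e1 : (∫ z in (0:ℝ)..a s, eX F (s, z)) = ∫ y in (0:ℝ)..1, a s * eX F (s, a s * y) := by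
    rw [intervalIntegral.integral_const_mul,
      intervalIntegral.mul_integral_comp_mul_left (f := fun z => eX F (s, z))]
    simp
  have e2 : F (s, a s) = ∫ y in (0:ℝ)..1, (F (s, a s * y) + y * (a s * eT F (s, a s * y))) := by
    have := intervalIntegral.integral_eq_sub_of_hasDerivAt (a := 0) (b := 1)
      (f := fun y => y * F (s, a s * y))
      (f' := fun y => F (s, a s * y) + y * (a s * eT F (s, a s * y))) (by
        intro y _
        have h1 : HasDerivAt (fun y => (s, a s * y)) (0, a s * 1) y :=
          (hasDerivAt_const y s).prodMk ((hasDerivAt_id y).const_mul (a s))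
        have h2 := (hfd (s, a s * y)).comp_hasDerivAt y h1
        rw [hlin] at h2
        exact ((hasDerivAt_id y).mul h2).congr_deriv (by simp)) (Continuous.intervalIntegrable (by fun_prop) _ _)
    rw [this]; simp
  rw [e1, e2, ← intervalIntegral.integral_const_mul, ← intervalIntegral.integral_add
    (Continuous.intervalIntegrable (by fun_prop) _ _)
    (Continuous.intervalIntegrable (by fun_prop) _ _)]
  congr 1; ext y; ring

/-- abbreviation for smoothness -/
abbrev Sm {E : Type*} [NormedAddCommGroup E] [NormedSpace ℝ E] (f : E → ℝ) : Prop :=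
  ContDiff ℝ (⊤ : ℕ∞) f

section dirderiv
variable {E : Type*} [NormedAddCommGroup E] [NormedSpace ℝ E]

lemma Sm.dir {f : E → ℝ} (hf : Sm f) (u : E) : Sm (fun q => fderiv ℝ f q u) :=
  (hf.fderiv_right (m := (⊤ : ℕ∞)) (by simp)).clm_apply contDiff_const

lemma Sm.df {f : E → ℝ} (hf : Sm f) : Differentiable ℝ f := hf.differentiable (by simp)

lemma Sm.dir_comm {f : E → ℝ} (hf : Sm f) (u w q : E) :
    fderiv ℝ (fun q => fderiv ℝ f q u) q w = fderiv ℝ (fun q => fderiv ℝ f q w) q u := by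
  have h1 : DifferentiableAt ℝ (fderiv ℝ f) q :=
    (hf.fderiv_right (m := (⊤ : ℕ∞)) (by simp)).differentiable (by simp) q
  have hs : IsSymmSndFDerivAt ℝ f q := by
    apply (hf.contDiffAt).isSymmSndFDerivAt
    simp
    exact WithTop.coe_le_coe.2 (le_top (a := (2:ℕ∞)))
  rw [fderiv_clm_apply h1 (by fun_prop), fderiv_clm_apply h1 (by fun_prop)]
  simpa using hs w u
end dirderiv

lemma Sm.dX {f : ℝ × ℝ × ℝ → ℝ} (hf : Sm f) : Sm (dX f) := hf.dir _
lemma Sm.dZ {f : ℝ × ℝ × ℝ → ℝ} (hf : Sm f) : Sm (dZ f) := hf.dir _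
lemma Sm.dT {f : ℝ × ℝ × ℝ → ℝ} (hf : Sm f) : Sm (dT f) := hf.dir _
lemma Sm.eX {f : ℝ × ℝ → ℝ} (hf : Sm f) : Sm (eX f) := hf.dir _
lemma Sm.eT {f : ℝ × ℝ → ℝ} (hf : Sm f) : Sm (eT f) := hf.dir _

lemma Sm.eXeT {f : ℝ × ℝ → ℝ} (hf : Sm f) : _root_.eX (_root_.eT f) = _root_.eT (_root_.eX f) :=
  funext fun q => hf.dir_comm _ _ q
lemma Sm.dXdZ {f : ℝ × ℝ × ℝ → ℝ} (hf : Sm f) :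
    _root_.dX (_root_.dZ f) = _root_.dZ (_root_.dX f) :=
  funext fun q => hf.dir_comm _ _ q

/-- partial derivatives as one-dimensional derivatives -/
lemma Sm.hX {f : ℝ × ℝ × ℝ → ℝ} (hf : Sm f) (x z t : ℝ) :
    HasDerivAt (fun s => f (s, z, t)) (_root_.dX f (x, z, t)) x :=
  (hf.df (x, z, t)).hasFDerivAt.comp_hasDerivAt x
    ((hasDerivAt_id x).prodMk (hasDerivAt_const x (z, t)))
lemma Sm.hZ {f : ℝ × ℝ × ℝ → ℝ} (hf : Sm f) (x z t : ℝ) :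
    HasDerivAt (fun s => f (x, s, t)) (_root_.dZ f (x, z, t)) z :=
  (hf.df (x, z, t)).hasFDerivAt.comp_hasDerivAt z
    ((hasDerivAt_const z x).prodMk ((hasDerivAt_id z).prodMk (hasDerivAt_const z t)))
lemma Sm.hT {f : ℝ × ℝ × ℝ → ℝ} (hf : Sm f) (x z t : ℝ) :
    HasDerivAt (fun s => f (x, z, s)) (_root_.dT f (x, z, t)) t :=
  (hf.df (x, z, t)).hasFDerivAt.comp_hasDerivAt t
    ((hasDerivAt_const t x).prodMk ((hasDerivAt_const t z).prodMk (hasDerivAt_id t)))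
lemma Sm.hx {f : ℝ × ℝ → ℝ} (hf : Sm f) (x t : ℝ) :
    HasDerivAt (fun s => f (s, t)) (_root_.eX f (x, t)) x :=
  (hf.df (x, t)).hasFDerivAt.comp_hasDerivAt x
    ((hasDerivAt_id x).prodMk (hasDerivAt_const x t))
lemma Sm.ht {f : ℝ × ℝ → ℝ} (hf : Sm f) (x t : ℝ) :
    HasDerivAt (fun s => f (x, s)) (_root_.eT f (x, t)) t :=
  (hf.df (x, t)).hasFDerivAt.comp_hasDerivAt t
    ((hasDerivAt_const t x).prodMk (hasDerivAt_id t))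

/-- the vertical integral over the fluid column -/
def colInt (η : ℝ × ℝ → ℝ) (g : ℝ × ℝ × ℝ → ℝ) (q : ℝ × ℝ) : ℝ :=
  ∫ z in (0:ℝ)..η q, g (q.1, z, q.2)

lemma colInt_cont {η : ℝ × ℝ → ℝ} (hη : Sm η) {g : ℝ × ℝ × ℝ → ℝ} (hg : Continuous g) :
    Continuous (colInt η g) := by
  have := hη.continuous
  exact intervalIntegral.continuous_parametric_intervalIntegral_of_continuous
    (f := fun q : ℝ × ℝ => fun z => g (q.1, z, q.2)) (by unfold uncurry; fun_prop) this

lemma colInt_x {η : ℝ × ℝ → ℝ} (hη : Sm η) {g : ℝ × ℝ × ℝ → ℝ} (hg : Sm g) (x t : ℝ) :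
    HasDerivAt (fun s => colInt η g (s, t))
      (colInt η (dX g) (x, t) + eX η (x, t) * g (x, η (x, t), t)) x := by
  have hF : Sm (fun q : ℝ × ℝ => g (q.1, q.2, t)) := hg.comp (by fun_prop)
  have ha : Sm (fun s => η (s, t)) := hη.comp (by fun_prop)
  have := leibniz _ hF _ ha x
  rw [(hη.hx x t).deriv] at this
  refine this.congr_deriv ?_
  unfold colInt
  congr 2; ext z
  rw [← (hF.hx x z).deriv, (hg.hX x z t).deriv]

lemma colInt_t {η : ℝ × ℝ → ℝ} (hη : Sm η) {g : ℝ × ℝ × ℝ → ℝ} (hg : Sm g) (x t : ℝ) :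
    HasDerivAt (fun s => colInt η g (x, s))
      (colInt η (dT g) (x, t) + eT η (x, t) * g (x, η (x, t), t)) t := by
  have hF : Sm (fun q : ℝ × ℝ => g (x, q.2, q.1)) := hg.comp (by fun_prop)
  have ha : Sm (fun s => η (x, s)) := hη.comp (by fun_prop)
  have := leibniz _ hF _ ha t
  rw [(hη.ht x t).deriv] at this
  refine this.congr_deriv ?_
  unfold colInt
  congr 2; ext z
  rw [← (hF.hx t z).deriv, (hg.hT x z t).deriv]

lemma colInt_z {η : ℝ × ℝ → ℝ} {g : ℝ × ℝ × ℝ → ℝ} (hg : Sm g) (x t : ℝ) :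
    colInt η (dZ g) (x, t) = g (x, η (x, t), t) - g (x, 0, t) := by
  have c := hg.dZ.continuous
  exact intervalIntegral.integral_eq_sub_of_hasDerivAt (f := fun z => g (x, z, t))
    (fun z _ => hg.hZ x z t) (Continuous.intervalIntegrable (by fun_prop) _ _)

lemma colInt_add {η : ℝ × ℝ → ℝ} {g h : ℝ × ℝ × ℝ → ℝ} (hg : Continuous g)
    (hh : Continuous h) (q : ℝ × ℝ) :
    colInt η (fun p => g p + h p) q = colInt η g q + colInt η h q :=
  intervalIntegral.integral_add (Continuous.intervalIntegrable (by fun_prop) _ _)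
    (Continuous.intervalIntegrable (by fun_prop) _ _)

/-- Integral over the moving domain at time t -/
def domInt (η : ℝ × ℝ → ℝ) (g : ℝ × ℝ × ℝ → ℝ) (t : ℝ) : ℝ :=
  ∫ x in (0:ℝ)..1, colInt η g (x, t)

lemma line_cont {F : ℝ × ℝ → ℝ} (hF : Continuous F) :
    Continuous (fun t => ∫ x in (0:ℝ)..1, F (x, t)) :=
  intervalIntegral.continuous_parametric_intervalIntegral_of_continuous'
    (f := fun t x => F (x, t)) (by unfold uncurry; fun_prop) _ _

lemma domInt_cont {η : ℝ × ℝ → ℝ} (hη : Sm η) {g : ℝ × ℝ × ℝ → ℝ} (hg : Continuous g) :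
    Continuous (domInt η g) := line_cont (colInt_cont hη hg)

lemma int_shift {a c b : ℝ → ℝ} (hc : Continuous c) (hb : Continuous b)
    (B : ∫ x in (0:ℝ)..1, b x = 0) (h : ∀ x, a x = c x + b x) :
    ∫ x in (0:ℝ)..1, a x = ∫ x in (0:ℝ)..1, c x := by
  simp_rw [h]
  rw [intervalIntegral.integral_add (hc.intervalIntegrable _ _) (hb.intervalIntegrable _ _), B,
    add_zero]

/-- The Reynolds transport theorem / divergence theorem on the moving domain. -/
lemma transport {η : ℝ × ℝ → ℝ} (hη : Sm η) (hper : ∀ x t, η (x + 1, t) = η (x, t))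
    {h0 h1 h2 : ℝ × ℝ × ℝ → ℝ} (s0 : Sm h0) (s1 : Sm h1) (s2 : Sm h2)
    (p1 : ∀ x z t, h1 (x + 1, z, t) = h1 (x, z, t)) (t : ℝ) :
    HasDerivAt (domInt η h0)
      (domInt η (fun q => dT h0 q + dX h1 q + dZ h2 q) t
        + ∫ x in (0:ℝ)..1, (eT η (x, t) * h0 (x, η (x, t), t) + eX η (x, t) * h1 (x, η (x, t), t)
            - h2 (x, η (x, t), t) + h2 (x, 0, t))) t := by
  have c0 := s0.dT.continuous
  have c1 := s1.dX.continuous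
  have c2 := s2.dZ.continuous
  have d0 := s0.continuous
  have d1 := s1.continuous
  have d2 := s2.continuous
  have cη := hη.continuous
  have cηX := hη.eX.continuous
  have cηT := hη.eT.continuous
  have k0 := colInt_cont hη c0
  have k1 := colInt_cont hη c1
  have k2 := colInt_cont hη c2
  have kk := colInt_cont hη d0
  have A := hasDerivAt_param (fun t x => colInt η h0 (x, t))
    (fun t x => colInt η (dT h0) (x, t) + eT η (x, t) * h0 (x, η (x, t), t))
    (by unfold uncurry; fun_prop) (by unfold uncurry; fun_prop)
    (fun t x => colInt_t hη s0 x t) 0 1 t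
  refine A.congr_deriv ?_
  have B : ∫ x in (0:ℝ)..1, (colInt η (dX h1) (x, t) + eX η (x, t) * h1 (x, η (x, t), t)) = 0 := by
    rw [intervalIntegral.integral_eq_sub_of_hasDerivAt (f := fun x => colInt η h1 (x, t))
      (fun x _ => colInt_x hη s1 x t) (Continuous.intervalIntegrable (by fun_prop) _ _)]
    have e1 := hper 0 t
    simp only [colInt]
    rw [zero_add] at e1
    rw [e1, sub_eq_zero]
    congr 1; ext z
    simpa using p1 0 z t
  have C : ∀ x, colInt η (fun q => dT h0 q + dX h1 q + dZ h2 q) (x, t) =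
      colInt η (dT h0) (x, t) + colInt η (dX h1) (x, t)
        + (h2 (x, η (x, t), t) - h2 (x, 0, t)) := by
    intro x
    rw [colInt_add (by fun_prop) c2, colInt_add c0 c1, colInt_z s2]
  unfold domInt
  simp_rw [C]
  rw [← intervalIntegral.integral_add (Continuous.intervalIntegrable (by fun_prop) _ _)
    (Continuous.intervalIntegrable (by fun_prop) _ _)]
  symm
  refine int_shift (by fun_prop) (by fun_prop) B (fun x => ?_)
  ring

section per
lemma eX_per {f : ℝ × ℝ → ℝ} (h : ∀ x t, f (x + 1, t) = f (x, t)) (x t : ℝ) :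
    eX f (x + 1, t) = eX f (x, t) := by
  have e : (fun q => f (q + (1, 0))) = f := by
    ext ⟨a, b⟩; simpa using h a b
  have := fderiv_comp_add_right (𝕜 := ℝ) (f := f) (x := (x, t)) ((1:ℝ), (0:ℝ))
  rw [e] at this
  simp only [Prod.mk_add_mk, add_zero] at this
  unfold eX; rw [this]
lemma eT_per {f : ℝ × ℝ → ℝ} (h : ∀ x t, f (x + 1, t) = f (x, t)) (x t : ℝ) :
    eT f (x + 1, t) = eT f (x, t) := by
  have e : (fun q => f (q + (1, 0))) = f := by
    ext ⟨a, b⟩; simpa using h a b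
  have := fderiv_comp_add_right (𝕜 := ℝ) (f := f) (x := (x, t)) ((1:ℝ), (0:ℝ))
  rw [e] at this
  simp only [Prod.mk_add_mk, add_zero] at this
  unfold eT; rw [this]
lemma dfd_per {f : ℝ × ℝ × ℝ → ℝ} (h : ∀ x z t, f (x + 1, z, t) = f (x, z, t)) (x z t : ℝ) :
    fderiv ℝ f (x + 1, z, t) = fderiv ℝ f (x, z, t) := by
  have e : (fun q => f (q + (1, 0, 0))) = f := by
    ext ⟨a, b, c⟩; simpa using h a b c
  have := fderiv_comp_add_right (𝕜 := ℝ) (f := f) (x := (x, z, t)) ((1:ℝ), (0:ℝ), (0:ℝ))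
  rw [e] at this
  simp only [Prod.mk_add_mk, add_zero] at this
  rw [this]
end per

lemma dX_add {f g : ℝ × ℝ × ℝ → ℝ} (hf : Sm f) (hg : Sm g) (q) :
    dX (fun q => f q + g q) q = dX f q + dX g q := by
  unfold dX; rw [fderiv_fun_add (hf.df q) (hg.df q)]; rfl
lemma dX_sub {f g : ℝ × ℝ × ℝ → ℝ} (hf : Sm f) (hg : Sm g) (q) :
    dX (fun q => f q - g q) q = dX f q - dX g q := by
  unfold dX; rw [fderiv_fun_sub (hf.df q) (hg.df q)]; rfl
lemma dX_mul {f g : ℝ × ℝ × ℝ → ℝ} (hf : Sm f) (hg : Sm g) (q) :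
    dX (fun q => f q * g q) q = f q * dX g q + g q * dX f q := by
  unfold dX; rw [fderiv_fun_mul (hf.df q) (hg.df q)]; rfl
lemma dX_const (c : ℝ) (q) : dX (fun _ => c) q = 0 := by simp [dX]
lemma dZ_add {f g : ℝ × ℝ × ℝ → ℝ} (hf : Sm f) (hg : Sm g) (q) :
    dZ (fun q => f q + g q) q = dZ f q + dZ g q := by
  unfold dZ; rw [fderiv_fun_add (hf.df q) (hg.df q)]; rfl
lemma dZ_sub {f g : ℝ × ℝ × ℝ → ℝ} (hf : Sm f) (hg : Sm g) (q) :
    dZ (fun q => f q - g q) q = dZ f q - dZ g q := by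
  unfold dZ; rw [fderiv_fun_sub (hf.df q) (hg.df q)]; rfl
lemma dZ_mul {f g : ℝ × ℝ × ℝ → ℝ} (hf : Sm f) (hg : Sm g) (q) :
    dZ (fun q => f q * g q) q = f q * dZ g q + g q * dZ f q := by
  unfold dZ; rw [fderiv_fun_mul (hf.df q) (hg.df q)]; rfl
lemma dZ_const (c : ℝ) (q) : dZ (fun _ => c) q = 0 := by simp [dZ]
lemma dT_add {f g : ℝ × ℝ × ℝ → ℝ} (hf : Sm f) (hg : Sm g) (q) :
    dT (fun q => f q + g q) q = dT f q + dT g q := by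
  unfold dT; rw [fderiv_fun_add (hf.df q) (hg.df q)]; rfl
lemma dT_mul {f g : ℝ × ℝ × ℝ → ℝ} (hf : Sm f) (hg : Sm g) (q) :
    dT (fun q => f q * g q) q = f q * dT g q + g q * dT f q := by
  unfold dT; rw [fderiv_fun_mul (hf.df q) (hg.df q)]; rfl
lemma dT_const (c : ℝ) (q) : dT (fun _ => c) q = 0 := by simp [dT]

/-- the plate energy identity -/
lemma plate_energy {η : ℝ × ℝ → ℝ} (hη : Sm η) (hper : ∀ x t, η (x + 1, t) = η (x, t))
    (ϱ δ β t : ℝ) :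
    HasDerivAt (fun t => ϱ / 2 * (∫ x in (0:ℝ)..1, (eT η (x, t)) ^ 2)
        + β / 2 * (∫ x in (0:ℝ)..1, (eX (eX η) (x, t)) ^ 2))
      ((∫ x in (0:ℝ)..1, eT η (x, t) * (ϱ * eT (eT η) (x, t) - δ * eX (eX (eT η)) (x, t)
        + β * eX (eX (eX (eX η))) (x, t)))
        - δ * ∫ x in (0:ℝ)..1, (eT (eX η) (x, t)) ^ 2) t := by
  have c1 := hη.eT.continuous
  have c2 := hη.eT.eT.continuous
  have c3 := hη.eX.eX.continuous
  have c4 := hη.eX.eX.eT.continuous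
  have c5 := hη.eX.eX.eX.eX.continuous
  have c6 := hη.eT.eX.eX.continuous
  have c7 := hη.eX.eT.continuous
  have c8 := hη.eX.eX.eX.continuous
  have A1 := hasDerivAt_param (fun t x => (eT η (x, t)) ^ 2)
    (fun t x => 2 * eT η (x, t) * eT (eT η) (x, t))
    (by unfold uncurry; fun_prop) (by unfold uncurry; fun_prop)
    (fun t x => ((hη.eT.ht x t).pow 2).congr_deriv (by simp)) 0 1 t
  have A2 := hasDerivAt_param (fun t x => (eX (eX η) (x, t)) ^ 2)
    (fun t x => 2 * eX (eX η) (x, t) * eT (eX (eX η)) (x, t))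
    (by unfold uncurry; fun_prop) (by unfold uncurry; fun_prop)
    (fun t x => ((hη.eX.eX.ht x t).pow 2).congr_deriv (by simp)) 0 1 t
  refine ((A1.const_mul (ϱ / 2)).add (A2.const_mul (β / 2))).congr_deriv ?_
  have B : ∫ x in (0:ℝ)..1, (δ * (eT η (x, t) * eX (eX (eT η)) (x, t) + eT (eX η) (x, t) ^ 2)
      + β * (eX (eX η) (x, t) * eT (eX (eX η)) (x, t)
      - eX (eX (eX (eX η))) (x, t) * eT η (x, t))) = 0 := by
    rw [intervalIntegral.integral_eq_sub_of_hasDerivAt (f := fun x =>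
      δ * (eT η (x, t) * eX (eT η) (x, t)) + β * (eX (eX η) (x, t) * eX (eT η) (x, t)
        - eX (eX (eX η)) (x, t) * eT η (x, t))) (fun x _ => by
        have q1 := hη.eT.hx x t
        have q2 := hη.eT.eX.hx x t
        have q3 := hη.eX.eX.hx x t
        have q4 := hη.eX.eX.eX.hx x t
        refine (((q1.mul q2).const_mul δ).add (((q3.mul q2).sub (q4.mul q1)).const_mul β)).congr_deriv
          ?_
        rw [← hη.eX.eXeT, ← hη.eXeT]
        ring) (Continuous.intervalIntegrable (by fun_prop) _ _)]
    have r1 := eT_per hper 0 t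
    have r2 := eX_per (eT_per hper) 0 t
    have r3 := eX_per (eX_per hper) 0 t
    have r4 := eX_per (eX_per (eX_per hper)) 0 t
    rw [zero_add] at r1 r2 r3 r4
    simp only [r1, r2, r3, r4, sub_self]
  rw [← intervalIntegral.integral_const_mul, ← intervalIntegral.integral_const_mul,
    ← intervalIntegral.integral_const_mul,
    ← intervalIntegral.integral_add (Continuous.intervalIntegrable (by fun_prop) _ _)
    (Continuous.intervalIntegrable (by fun_prop) _ _),
    ← intervalIntegral.integral_sub (Continuous.intervalIntegrable (by fun_prop) _ _)
    (Continuous.intervalIntegrable (by fun_prop) _ _)]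
  refine int_shift (by fun_prop) (by fun_prop) B (fun x => ?_)
  ring

lemma colInt_congr {η : ℝ × ℝ → ℝ} {g h : ℝ × ℝ × ℝ → ℝ} {x t : ℝ} (hp : 0 ≤ η (x, t))
    (H : ∀ z ∈ Ioo 0 (η (x, t)), g (x, z, t) = h (x, z, t)) :
    colInt η g (x, t) = colInt η h (x, t) := by
  unfold colInt
  rw [intervalIntegral.integral_of_le hp, intervalIntegral.integral_of_le hp,
    integral_Ioc_eq_integral_Ioo, integral_Ioc_eq_integral_Ioo]
  exact setIntegral_congr_fun measurableSet_Ioo H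

section fluid
variable (v1 v2 pr : ℝ × ℝ × ℝ → ℝ)
def h0 (q : ℝ × ℝ × ℝ) : ℝ := 1 / 2 * (v1 q * v1 q + v2 q * v2 q)
def s11 (q : ℝ × ℝ × ℝ) : ℝ := 2 * dX v1 q - pr q
def s12 (q : ℝ × ℝ × ℝ) : ℝ := dZ v1 q + dX v2 q
def s22 (q : ℝ × ℝ × ℝ) : ℝ := 2 * dZ v2 q - pr q
def h1 (q : ℝ × ℝ × ℝ) : ℝ := v1 q * (1 / 2 * (v1 q * v1 q + v2 q * v2 q))
  - (s11 v1 pr q * v1 q + s12 v1 v2 q * v2 q) + (v1 q * dX v1 q + v2 q * dZ v1 q)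
def h2 (q : ℝ × ℝ × ℝ) : ℝ := v2 q * (1 / 2 * (v1 q * v1 q + v2 q * v2 q))
  - (s12 v1 v2 q * v1 q + s22 v2 pr q * v2 q) + (v1 q * dX v2 q + v2 q * dZ v2 q)
def gradSq (q : ℝ × ℝ × ℝ) : ℝ := dX v1 q ^ 2 + dZ v1 q ^ 2 + dX v2 q ^ 2 + dZ v2 q ^ 2
/-- the space-time divergence -/
def src (q : ℝ × ℝ × ℝ) : ℝ := dT (h0 v1 v2) q + dX (h1 v1 v2 pr) q + dZ (h2 v1 v2 pr) q
end fluid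

section fluid2
variable {ϱ δ β T : ℝ} {f1 f2 v1 v2 pr : ℝ × ℝ × ℝ → ℝ} {η : ℝ × ℝ → ℝ} {η0 : ℝ → ℝ}

lemma sm_all (a1 : Sm v1) (a2 : Sm v2) (a3 : Sm pr) :
    Sm (h0 v1 v2) ∧ Sm (s11 v1 pr) ∧ Sm (s12 v1 v2) ∧ Sm (s22 v2 pr) ∧ Sm (h1 v1 v2 pr) ∧
      Sm (h2 v1 v2 pr) := by
  have b1 := a1.dX
  have b2 := a1.dZ
  have b3 := a2.dX
  have b4 := a2.dZ
  have k1 : Sm (s11 v1 pr) := by unfold Sm s11; fun_prop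
  have k2 : Sm (s12 v1 v2) := by unfold Sm s12; fun_prop
  have k3 : Sm (s22 v2 pr) := by unfold Sm s22; fun_prop
  refine ⟨by unfold Sm h0; fun_prop, k1, k2, k3, by unfold Sm h1; fun_prop,
    by unfold Sm h2; fun_prop⟩

lemma src_eq (S : IsClassicalFSISolution ϱ δ β T f1 f2 v1 v2 pr η η0) {x z t : ℝ}
    (ht : t ∈ Ioo 0 T) (hz : z ∈ Ioo 0 (η (x, t))) :
    src v1 v2 pr (x, z, t) = f1 (x, z, t) * v1 (x, z, t) + f2 (x, z, t) * v2 (x, z, t)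
      - gradSq v1 v2 (x, z, t) := by
  have a1 : Sm v1 := S.smooth_v1
  have a2 : Sm v2 := S.smooth_v2
  have a3 : Sm pr := S.smooth_pr
  obtain ⟨k0, k1, k2, k3, -, -⟩ := sm_all a1 a2 a3
  have b1 := a1.dX
  have b2 := a1.dZ
  have b3 := a2.dX
  have b4 := a2.dZ
  have cη : Continuous η := S.smooth_η.continuous
  have hopen : IsOpen {q : ℝ × ℝ × ℝ | q.2.2 ∈ Ioo 0 T ∧ q.2.1 ∈ Ioo 0 (η (q.1, q.2.2))} := by
    refine (isOpen_Ioo.preimage (by fun_prop)).inter ?_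
    have o1 : IsOpen {q : ℝ × ℝ × ℝ | 0 < q.2.1} := isOpen_lt (by fun_prop) (by fun_prop)
    have o2 : IsOpen {q : ℝ × ℝ × ℝ | q.2.1 < η (q.1, q.2.2)} :=
      isOpen_lt (by fun_prop) (by fun_prop)
    exact o1.inter o2
  have hdiv : (fun q => dX v1 q + dZ v2 q) =ᶠ[𝓝 (x, z, t)] (fun _ => 0) := by
    filter_upwards [hopen.mem_nhds (show (x, z, t) ∈ _ from ⟨ht, hz⟩)]
    rintro ⟨x, z, t⟩ ⟨h1, h2⟩
    exact S.incompressible x z t h1 h2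
  have hfd := Filter.EventuallyEq.fderiv_eq (𝕜 := ℝ) hdiv
  have e1 : dX (fun q => dX v1 q + dZ v2 q) (x, z, t) = 0 := by
    unfold dX at hfd ⊢; rw [hfd]; simp
  have e2 : dZ (fun q => dX v1 q + dZ v2 q) (x, z, t) = 0 := by
    unfold dZ at hfd ⊢; rw [hfd]; simp
  rw [dX_add b1 b4] at e1
  rw [dZ_add b1 b4] at e2
  rw [a2.dXdZ] at e1
  have m1 := S.momentum_1 x z t ht hz
  have m2 := S.momentum_2 x z t ht hz
  have i := S.incompressible x z t ht hz
  change _ - (dX (s11 v1 pr) _ + dZ (s12 v1 v2) _) = _ at m1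
  change _ - (dX (s12 v1 v2) _ + dZ (s22 v2 pr) _) = _ at m2
  unfold src h0 h1 h2 gradSq
  simp (disch := first | assumption | (unfold Sm; fun_prop)) only [dX_add, dX_sub, dX_mul, dX_const, dZ_add, dZ_sub, dZ_mul,
    dZ_const, dT_add, dT_mul, dT_const]
  rw [a1.dXdZ]
  have u1 : s11 v1 pr (x, z, t) = 2 * dX v1 (x, z, t) - pr (x, z, t) := rfl
  have u2 : s12 v1 v2 (x, z, t) = dZ v1 (x, z, t) + dX v2 (x, z, t) := rfl
  have u3 : s22 v2 pr (x, z, t) = 2 * dZ v2 (x, z, t) - pr (x, z, t) := rfl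
  rw [u1, u2, u3]
  linear_combination v1 (x, z, t) * m1 + v2 (x, z, t) * m2
    + (1 / 2 * (v1 (x, z, t) ^ 2 + v2 (x, z, t) ^ 2) + pr (x, z, t)) * i
    + v1 (x, z, t) * e1 + v2 (x, z, t) * e2

/-- the energy identity -/
lemma energy_id (S : IsClassicalFSISolution ϱ δ β T f1 f2 v1 v2 pr η η0) {t : ℝ}
    (ht : t ∈ Ioo 0 T) :
    HasDerivAt (fun t => domInt η (h0 v1 v2) t + (ϱ / 2 * (∫ x in (0:ℝ)..1, (eT η (x, t)) ^ 2)
        + β / 2 * (∫ x in (0:ℝ)..1, (eX (eX η) (x, t)) ^ 2)))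
      (domInt η (src v1 v2 pr) t - δ * ∫ x in (0:ℝ)..1, (eT (eX η) (x, t)) ^ 2) t := by
  have a1 : Sm v1 := S.smooth_v1
  have a2 : Sm v2 := S.smooth_v2
  have a3 : Sm pr := S.smooth_pr
  have aη : Sm η := S.smooth_η
  obtain ⟨k0, k11, k12, k22, k1, k2⟩ := sm_all a1 a2 a3
  have P := plate_energy aη S.periodic_η ϱ δ β t
  have Q := transport aη S.periodic_η k0 k1 k2 (by
    intro x z t
    simp only [h1, s11, s12, dX, dZ, dfd_per S.periodic_v1, dfd_per S.periodic_v2,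
      S.periodic_v1, S.periodic_v2, S.periodic_pr]) t
  refine (Q.add P).congr_deriv ?_
  have hI := Ioo_subset_Icc_self ht
  have key : ∀ x, eT η (x, t) * h0 v1 v2 (x, η (x, t), t) + eX η (x, t) * h1 v1 v2 pr (x, η (x, t), t)
            - h2 v1 v2 pr (x, η (x, t), t) + h2 v1 v2 pr (x, 0, t)
      = - (eT η (x, t) * (ϱ * eT (eT η) (x, t) - δ * eX (eX (eT η)) (x, t)
        + β * eX (eX (eX (eX η))) (x, t))) := by
    intro x
    have n1 := (S.noslip x t hI).1
    have n2 := (S.noslip x t hI).2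
    have w1 := S.kinematic_1 x t hI
    have w2 := S.kinematic_2 x t hI
    have pl := S.plate x t ht
    have hpos := S.η_pos x t hI
    -- incompressibility up to the boundary
    have i : dX v1 (x, η (x, t), t) + dZ v2 (x, η (x, t), t) = 0 := by
      have c1 := a1.dX.continuous
      have c2 := a2.dZ.continuous
      have : EqOn (fun z => dX v1 (x, z, t) + dZ v2 (x, z, t)) (fun _ => 0)
          (closure (Ioo 0 (η (x, t)))) :=
        EqOn.closure (fun z hz => S.incompressible x z t ht hz) (by fun_prop) (by fun_prop)
      rw [closure_Ioo hpos.ne] at this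
      exact this ⟨hpos.le, le_rfl⟩
    -- derivative of the first kinematic condition
    have j : dX v1 (x, η (x, t), t) + eX η (x, t) * dZ v1 (x, η (x, t), t) = 0 := by
      have d1 : HasDerivAt (fun s => (s, η (s, t), t)) (1, eX η (x, t), 0) x :=
        (hasDerivAt_id x).prodMk ((aη.hx x t).prodMk (hasDerivAt_const x t))
      have d2 := (a1.df (x, η (x, t), t)).hasFDerivAt.comp_hasDerivAt x d1
      have d3 : (v1 ∘ fun s => (s, η (s, t), t)) = fun _ => 0 := by
        ext s; exact S.kinematic_1 s t hI
      rw [d3] at d2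
      have d4 := d2.unique (hasDerivAt_const x 0)
      have : ((1, eX η (x, t), 0) : ℝ × ℝ × ℝ) = (1, 0, 0) + eX η (x, t) • (0, 1, 0) := by simp
      rw [this, map_add, map_smul] at d4
      exact d4
    unfold h0 h1 h2 s11 s12 s22
    rw [n1, n2, w1, w2, pl]
    linear_combination (eT η (x, t)) * j - (eT η (x, t)) * i
  simp_rw [key]
  rw [intervalIntegral.integral_neg]
  unfold src
  ring

lemma volume_const (S : IsClassicalFSISolution ϱ δ β T f1 f2 v1 v2 pr η η0) {t : ℝ}
    (ht : t ∈ Ico 0 T) : ∫ x in (0:ℝ)..1, η (x, t) = ∫ x in (0:ℝ)..1, η0 x := by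
  have a1 : Sm v1 := S.smooth_v1
  have a2 : Sm v2 := S.smooth_v2
  have aη : Sm η := S.smooth_η
  have s0 : Sm (fun _ : ℝ × ℝ × ℝ => (1:ℝ)) := contDiff_const
  have Q := fun t => transport aη S.periodic_η s0 a1 a2 S.periodic_v1 t
  have e : domInt η (fun _ : ℝ × ℝ × ℝ => (1:ℝ)) = fun t => ∫ x in (0:ℝ)..1, η (x, t) := by
    ext t; simp [domInt, colInt]
  rw [e] at Q
  have hder : ∀ t ∈ Ioo 0 T, HasDerivAt (fun t => ∫ x in (0:ℝ)..1, η (x, t)) 0 t := by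
    intro t ht
    have hI := Ioo_subset_Icc_self ht
    refine (Q t).congr_deriv ?_
    have z1 : domInt η (fun q => dT (fun _ : ℝ × ℝ × ℝ => (1:ℝ)) q + dX v1 q + dZ v2 q) t = 0 := by
      unfold domInt
      have : ∀ x, colInt η (fun q => dT (fun _ : ℝ × ℝ × ℝ => (1:ℝ)) q + dX v1 q + dZ v2 q) (x, t)
          = colInt η (fun _ => 0) (x, t) := fun x =>
        colInt_congr (S.η_pos x t hI).le (fun z hz => by
          have := S.incompressible x z t ht hz
          simp only [dT_const]; linarith)
      simp_rw [this]
      simp [colInt]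
    rw [z1]
    have z2 : ∀ x, eT η (x, t) * 1 + eX η (x, t) * v1 (x, η (x, t), t)
            - v2 (x, η (x, t), t) + v2 (x, 0, t) = 0 := by
      intro x
      rw [S.kinematic_1 x t hI, S.kinematic_2 x t hI, (S.noslip x t hI).2]; ring
    simp_rw [z2]; simp
  have hc : ContinuousOn (fun t => ∫ x in (0:ℝ)..1, η (x, t)) (Icc 0 t) :=
    (line_cont aη.continuous).continuousOn
  rcases ht.1.eq_or_lt with h | h
  · subst h; simp_rw [S.init_η]
  · obtain ⟨c, hc1, hc2⟩ := exists_hasDerivAt_eq_slope (fun t => ∫ x in (0:ℝ)..1, η (x, t))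
      (fun _ => 0) h hc (fun s hs => hder s ⟨hs.1, hs.2.trans ht.2⟩)
    have : (∫ x in (0:ℝ)..1, η (x, t)) - (∫ x in (0:ℝ)..1, η (x, 0)) = 0 := by
      rw [eq_comm, div_eq_zero_iff] at hc2
      rcases hc2 with dh | dh
      · exact dh
      · linarith
    simp_rw [S.init_η] at this
    linarith

end fluid2

lemma setInt_eq {η : ℝ × ℝ → ℝ} (cη : Continuous η) {g : ℝ × ℝ × ℝ → ℝ} (cg : Continuous g)
    {s : ℝ} (hp : ∀ x, 0 < η (x, s)) :
    (∫ p in {p : ℝ × ℝ | p.1 ∈ Ioo (0:ℝ) 1 ∧ p.2 ∈ Ioo 0 (η (p.1, s))}, g (p.1, p.2, s))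
      = domInt η g s := by
  set A := {p : ℝ × ℝ | p.1 ∈ Ioo (0:ℝ) 1 ∧ p.2 ∈ Ioo 0 (η (p.1, s))} with hA
  have hopen : IsOpen A := by
    have o0 : IsOpen {q : ℝ × ℝ | q.1 ∈ Ioo (0:ℝ) 1} := isOpen_Ioo.preimage continuous_fst
    have o1 : IsOpen {q : ℝ × ℝ | 0 < q.2} := isOpen_lt (by fun_prop) (by fun_prop)
    have o2 : IsOpen {q : ℝ × ℝ | q.2 < η (q.1, s)} := isOpen_lt (by fun_prop) (by fun_prop)
    exact o0.inter (o1.inter o2)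
  have cηs : Continuous fun x => η (x, s) := by fun_prop
  obtain ⟨M, hM⟩ := isCompact_Icc.exists_bound_of_continuousOn
    (cηs.continuousOn (s := Icc (0:ℝ) 1))
  have hsub : A ⊆ Icc (0:ℝ) 1 ×ˢ Icc 0 M := by
    rintro ⟨x, z⟩ ⟨h1, h2⟩
    refine ⟨Ioo_subset_Icc_self h1, h2.1.le, ?_⟩
    have := hM x (Ioo_subset_Icc_self h1)
    exact h2.2.le.trans ((le_abs_self _).trans this)
  have cgs : Continuous fun p : ℝ × ℝ => g (p.1, p.2, s) := by fun_prop
  have hint : IntegrableOn (fun p : ℝ × ℝ => g (p.1, p.2, s)) A :=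
    (cgs.continuousOn.integrableOn_compact (isCompact_Icc.prod isCompact_Icc)).mono_set hsub
  rw [← MeasureTheory.integral_indicator hopen.measurableSet]
  rw [← integrable_indicator_iff hopen.measurableSet] at hint
  rw [Measure.volume_eq_prod] at hint ⊢
  rw [integral_prod _ hint]
  unfold domInt
  rw [intervalIntegral.integral_of_le zero_le_one, integral_Ioc_eq_integral_Ioo,
    ← MeasureTheory.integral_indicator measurableSet_Ioo]
  congr 1; ext x
  by_cases hx : x ∈ Ioo (0:ℝ) 1
  · rw [indicator_of_mem hx]
    unfold colInt
    rw [intervalIntegral.integral_of_le (hp x).le, integral_Ioc_eq_integral_Ioo,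
      ← MeasureTheory.integral_indicator measurableSet_Ioo]
    congr 1; ext z
    by_cases hz : z ∈ Ioo 0 (η (x, s))
    · rw [indicator_of_mem hz, indicator_of_mem (show (x, z) ∈ A from ⟨hx, hz⟩)]
    · rw [indicator_of_notMem hz, indicator_of_notMem (fun h : (x, z) ∈ A => hz h.2)]
  · rw [indicator_of_notMem hx]
    have : ∀ z, A.indicator (fun p : ℝ × ℝ => g (p.1, p.2, s)) (x, z) = 0 := fun z =>
      indicator_of_notMem (fun h : (x, z) ∈ A => hx h.1) _
    simp_rw [this]; simp

/-- oscillation bound -/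
lemma osc_le {h dh : ℝ → ℝ} {L : ℝ} (hd : ∀ x, HasDerivAt h (dh x) x) (hc : Continuous dh)
    {x y : ℝ} (hx : x ∈ Icc 0 L) (hy : y ∈ Icc 0 L) :
    |h x - h y| ≤ ∫ z in (0:ℝ)..L, |dh z| := by
  have hL : 0 ≤ L := hx.1.trans hx.2
  rw [← intervalIntegral.integral_eq_sub_of_hasDerivAt (fun z _ => hd z)
    (hc.intervalIntegrable _ _)]
  have e1 := intervalIntegral.norm_integral_le_abs_integral_norm (f := dh) (a := y) (b := x)
    (μ := volume)
  refine e1.trans ?_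
  have hu : uIoc y x ⊆ uIoc 0 L := by
    rw [uIoc_of_le hL]
    intro z hz
    rcases le_total y x with h | h
    · rw [uIoc_of_le h] at hz; exact ⟨hy.1.trans_lt hz.1, hz.2.trans hx.2⟩
    · rw [uIoc_of_ge h] at hz; exact ⟨hx.1.trans_lt hz.1, hz.2.trans hy.2⟩
  have e2 := intervalIntegral.abs_integral_mono_interval (f := fun z => ‖dh z‖) (μ := volume)
    hu (Eventually.of_forall fun z => norm_nonneg _) (Continuous.intervalIntegrable (by fun_prop) _ _)
  refine e2.trans (le_of_eq ?_)
  exact abs_of_nonneg (intervalIntegral.integral_nonneg hL fun z _ => norm_nonneg _)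

lemma sq_int_le {a : ℝ → ℝ} (ha : Continuous a) :
    (∫ z in (0:ℝ)..1, |a z|) ^ 2 ≤ ∫ z in (0:ℝ)..1, a z ^ 2 := by
  set m := ∫ z in (0:ℝ)..1, |a z| with hm
  have h : 0 ≤ ∫ z in (0:ℝ)..1, (|a z| - m) ^ 2 :=
    intervalIntegral.integral_nonneg zero_le_one fun z _ => sq_nonneg _
  have e : ∀ z, (|a z| - m) ^ 2 = a z ^ 2 - 2 * m * |a z| + m ^ 2 := by
    intro z; rw [← sq_abs (a z)]; ring
  simp_rw [e] at h
  rw [intervalIntegral.integral_add (Continuous.intervalIntegrable (by fun_prop) _ _)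
    (Continuous.intervalIntegrable (by fun_prop) _ _),
    intervalIntegral.integral_sub (Continuous.intervalIntegrable (by fun_prop) _ _)
    (Continuous.intervalIntegrable (by fun_prop) _ _), intervalIntegral.integral_const_mul,
    ← hm] at h
  simp at h
  nlinarith

lemma sup_bound {h dh ddh : ℝ → ℝ} (hd : ∀ x, HasDerivAt h (dh x) x)
    (hd' : ∀ x, HasDerivAt dh (ddh x) x) (hc : Continuous ddh) (hper : h 0 = h 1)
    {x : ℝ} (hx : x ∈ Icc (0:ℝ) 1) (hpos : 0 ≤ h x) :
    h x ^ 2 ≤ 2 * (∫ y in (0:ℝ)..1, h y) ^ 2 + 2 * ∫ y in (0:ℝ)..1, ddh y ^ 2 := by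
  have ch : Continuous h := continuous_iff_continuousAt.2 fun x => (hd x).continuousAt
  have ch' : Continuous dh := continuous_iff_continuousAt.2 fun x => (hd' x).continuousAt
  obtain ⟨c, hc1, hc2⟩ := exists_hasDerivAt_eq_zero zero_lt_one ch.continuousOn hper
    (fun x _ => hd x)
  set M := ∫ z in (0:ℝ)..1, |ddh z| with hM
  have b1 : ∀ y ∈ Icc (0:ℝ) 1, |dh y| ≤ M := by
    intro y hy
    have := osc_le hd' hc hy (Ioo_subset_Icc_self hc1)
    rwa [hc2, sub_zero] at this
  have b2 : ∫ z in (0:ℝ)..1, |dh z| ≤ M := by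
    have := intervalIntegral.integral_mono_on (a := (0:ℝ)) (b := 1) (μ := volume)
      zero_le_one (Continuous.intervalIntegrable (u := fun z => |dh z|) (by fun_prop) _ _)
      (Continuous.intervalIntegrable (u := fun _ => M) (by fun_prop) _ _) b1
    simpa using this
  have b3 : h x ≤ (∫ y in (0:ℝ)..1, h y) + M := by
    have := intervalIntegral.integral_mono_on (a := (0:ℝ)) (b := 1) (μ := volume)
      zero_le_one (Continuous.intervalIntegrable (u := fun z => h x - M) (by fun_prop) _ _)
      (Continuous.intervalIntegrable (u := h) (by fun_prop) _ _) (fun y hy => by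
        have := (le_abs_self _).trans (osc_le hd ch' hx hy)
        linarith)
    simp at this
    linarith
  have b4 := sq_int_le hc
  rw [← hM] at b4
  nlinarith [sq_nonneg ((∫ y in (0:ℝ)..1, h y) - M)]

section est
variable {ϱ δ β T : ℝ} {f1 f2 v1 v2 pr : ℝ × ℝ × ℝ → ℝ} {η : ℝ × ℝ → ℝ} {η0 : ℝ → ℝ}

lemma gradSq_cont (a1 : Sm v1) (a2 : Sm v2) : Continuous (gradSq v1 v2) := by
  have b1 := a1.dX.continuous
  have b2 := a1.dZ.continuous
  have b3 := a2.dX.continuous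
  have b4 := a2.dZ.continuous
  unfold gradSq; fun_prop

lemma src_cont (a1 : Sm v1) (a2 : Sm v2) (a3 : Sm pr) : Continuous (src v1 v2 pr) := by
  obtain ⟨k0, k11, k12, k22, k1, k2⟩ := sm_all a1 a2 a3
  have b1 := k0.dT.continuous
  have b2 := k1.dX.continuous
  have b3 := k2.dZ.continuous
  unfold src; fun_prop

lemma col_bound (S : IsClassicalFSISolution ϱ δ β T f1 f2 v1 v2 pr η η0) {Cf : ℝ} (hCf : 0 < Cf)
    (hf : ∀ q : ℝ × ℝ × ℝ, f1 q ^ 2 + f2 q ^ 2 ≤ Cf ^ 2) {t : ℝ} (ht : t ∈ Ioo 0 T) (x : ℝ) :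
    colInt η (src v1 v2 pr) (x, t) ≤ Cf ^ 2 * η (x, t) ^ 3
      - 1 / 2 * colInt η (gradSq v1 v2) (x, t) := by
  have a1 : Sm v1 := S.smooth_v1
  have a2 : Sm v2 := S.smooth_v2
  have a3 : Sm pr := S.smooth_pr
  have hI := Ioo_subset_Icc_self ht
  have hpos := S.η_pos x t hI
  have cG := gradSq_cont a1 a2
  have cS := src_cont a1 a2 a3
  have b2 := a1.dZ.continuous
  have b4 := a2.dZ.continuous
  set H := η (x, t) with hH
  set M1 := ∫ z in (0:ℝ)..H, |dZ v1 (x, z, t)| with hM1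
  set M2 := ∫ z in (0:ℝ)..H, |dZ v2 (x, z, t)| with hM2
  have p : ∀ z ∈ Ioo 0 H, src v1 v2 pr (x, z, t) ≤ Cf * (M1 + M2) - gradSq v1 v2 (x, z, t) := by
    intro z hz
    rw [src_eq S ht hz]
    have o1 := osc_le (fun z => a1.hZ x z t) (by fun_prop) (Ioo_subset_Icc_self hz)
      (⟨le_rfl, hpos.le⟩ : (0:ℝ) ∈ Icc 0 H)
    have o2 := osc_le (fun z => a2.hZ x z t) (by fun_prop) (Ioo_subset_Icc_self hz)
      (⟨le_rfl, hpos.le⟩ : (0:ℝ) ∈ Icc 0 H)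
    rw [(S.noslip x t hI).1, sub_zero, ← hM1] at o1
    rw [(S.noslip x t hI).2, sub_zero, ← hM2] at o2
    have g1 : |f1 (x, z, t)| ≤ Cf := abs_le_of_sq_le_sq (by nlinarith [hf (x, z, t), sq_nonneg (f2 (x, z, t))]) hCf.le
    have g2 : |f2 (x, z, t)| ≤ Cf := abs_le_of_sq_le_sq (by nlinarith [hf (x, z, t), sq_nonneg (f1 (x, z, t))]) hCf.le
    have r1 : f1 (x, z, t) * v1 (x, z, t) ≤ Cf * M1 := by
      refine (le_abs_self _).trans ?_
      rw [abs_mul]; exact mul_le_mul g1 o1 (abs_nonneg _) hCf.le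
    have r2 : f2 (x, z, t) * v2 (x, z, t) ≤ Cf * M2 := by
      refine (le_abs_self _).trans ?_
      rw [abs_mul]; exact mul_le_mul g2 o2 (abs_nonneg _) hCf.le
    linarith
  have i1 : colInt η (src v1 v2 pr) (x, t) ≤
      ∫ z in (0:ℝ)..H, (Cf * (M1 + M2) - gradSq v1 v2 (x, z, t)) := by
    unfold colInt
    exact intervalIntegral.integral_mono_on_of_le_Ioo hpos.le
      (Continuous.intervalIntegrable (by fun_prop) _ _)
      (Continuous.intervalIntegrable (by fun_prop) _ _) p
  have i2 : (∫ z in (0:ℝ)..H, (Cf * (M1 + M2) - gradSq v1 v2 (x, z, t)))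
      = (∫ z in (0:ℝ)..H, (Cf * H * (|dZ v1 (x, z, t)| + |dZ v2 (x, z, t)|)))
        - colInt η (gradSq v1 v2) (x, t) := by
    rw [intervalIntegral.integral_sub (Continuous.intervalIntegrable (by fun_prop) _ _)
      (Continuous.intervalIntegrable (by fun_prop) _ _), intervalIntegral.integral_const_mul (Cf * H),
      intervalIntegral.integral_const, intervalIntegral.integral_add (Continuous.intervalIntegrable (by fun_prop) _ _)
      (Continuous.intervalIntegrable (by fun_prop) _ _), ← hM1, ← hM2]
    simp only [colInt, ← hH, sub_zero, smul_eq_mul]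
    ring
  have i3 : (∫ z in (0:ℝ)..H, (Cf * H * (|dZ v1 (x, z, t)| + |dZ v2 (x, z, t)|)))
      ≤ ∫ z in (0:ℝ)..H, (Cf ^ 2 * H ^ 2 + 1 / 2 * gradSq v1 v2 (x, z, t)) := by
    refine intervalIntegral.integral_mono_on hpos.le
      (Continuous.intervalIntegrable (by fun_prop) _ _)
      (Continuous.intervalIntegrable (by fun_prop) _ _) (fun z hz => ?_)
    unfold gradSq
    have := sq_abs (dZ v1 (x, z, t))
    have := sq_abs (dZ v2 (x, z, t))
    nlinarith [sq_nonneg (Cf * H - |dZ v1 (x, z, t)|), sq_nonneg (Cf * H - |dZ v2 (x, z, t)|),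
      sq_nonneg (dX v1 (x, z, t)), sq_nonneg (dX v2 (x, z, t))]
  have i4 : (∫ z in (0:ℝ)..H, (Cf ^ 2 * H ^ 2 + 1 / 2 * gradSq v1 v2 (x, z, t)))
      = Cf ^ 2 * H ^ 3 + 1 / 2 * colInt η (gradSq v1 v2) (x, t) := by
    rw [intervalIntegral.integral_add (Continuous.intervalIntegrable (by fun_prop) _ _)
      (Continuous.intervalIntegrable (by fun_prop) _ _), intervalIntegral.integral_const_mul (1 / 2 : ℝ),
      intervalIntegral.integral_const]
    simp only [colInt, ← hH, sub_zero, smul_eq_mul]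
    ring
  linarith

lemma dom_bound (S : IsClassicalFSISolution ϱ δ β T f1 f2 v1 v2 pr η η0) {Cf : ℝ} (hCf : 0 < Cf)
    (hf : ∀ q : ℝ × ℝ × ℝ, f1 q ^ 2 + f2 q ^ 2 ≤ Cf ^ 2) {t : ℝ} (ht : t ∈ Ioo 0 T) :
    domInt η (src v1 v2 pr) t + 1 / 2 * domInt η (gradSq v1 v2) t
      ≤ Cf ^ 2 * ((∫ x in (0:ℝ)..1, η0 x) * (2 * (∫ x in (0:ℝ)..1, η0 x) ^ 2
        + 2 * ∫ x in (0:ℝ)..1, (eX (eX η) (x, t)) ^ 2)) := by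
  have a1 : Sm v1 := S.smooth_v1
  have a2 : Sm v2 := S.smooth_v2
  have a3 : Sm pr := S.smooth_pr
  have aη : Sm η := S.smooth_η
  have hI := Ioo_subset_Icc_self ht
  have cG := colInt_cont aη (gradSq_cont a1 a2)
  have cS := colInt_cont aη (src_cont a1 a2 a3)
  have cη := aη.continuous
  have cxx := aη.eX.eX.continuous
  have hV := volume_const S ⟨ht.1.le, ht.2⟩
  rw [← hV]
  set V := ∫ x in (0:ℝ)..1, η (x, t)
  set K := ∫ x in (0:ℝ)..1, (eX (eX η) (x, t)) ^ 2 with hK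
  unfold domInt
  rw [← intervalIntegral.integral_const_mul, ← intervalIntegral.integral_add
    (Continuous.intervalIntegrable (by fun_prop) _ _)
    (Continuous.intervalIntegrable (by fun_prop) _ _)]
  have : (∫ x in (0:ℝ)..1, Cf ^ 2 * (2 * V ^ 2 + 2 * K) * η (x, t))
      = Cf ^ 2 * (V * (2 * V ^ 2 + 2 * K)) := by
    rw [intervalIntegral.integral_const_mul]; ring
  rw [← this]
  refine intervalIntegral.integral_mono_on zero_le_one
    (Continuous.intervalIntegrable (by fun_prop) _ _)
    (Continuous.intervalIntegrable (by fun_prop) _ _) (fun x hx => ?_)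
  have h1 := col_bound S hCf hf ht x
  have hpos := S.η_pos x t hI
  have h2 := sup_bound (fun x => aη.hx x t) (fun x => aη.eX.hx x t) (by fun_prop)
    (by have := S.periodic_η 0 t; rw [zero_add] at this; exact this.symm) hx hpos.le
  have h3 := mul_le_mul_of_nonneg_left h2 (by positivity : 0 ≤ Cf ^ 2 * η (x, t))
  calc _ ≤ Cf ^ 2 * η (x, t) ^ 3 := by linarith
    _ = Cf ^ 2 * η (x, t) * η (x, t) ^ 2 := by ring
    _ ≤ _ := h3
    _ = _ := by ring

lemma dom_nonneg (S : IsClassicalFSISolution ϱ δ β T f1 f2 v1 v2 pr η η0) {t : ℝ}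
    (ht : t ∈ Icc 0 T) {g : ℝ × ℝ × ℝ → ℝ} (hg : ∀ q, 0 ≤ g q) : 0 ≤ domInt η g t :=
  intervalIntegral.integral_nonneg zero_le_one fun x _ =>
    intervalIntegral.integral_nonneg (S.η_pos x t ht).le fun _ _ => hg _

lemma gronwall_lin {Y Y' : ℝ → ℝ} {t A B : ℝ} (ht : 0 < t)
    (hc : ContinuousOn Y (Icc 0 t)) (hd : ∀ s ∈ Ioo 0 t, HasDerivAt Y (Y' s) s)
    (hb : ∀ s ∈ Ioo 0 t, Y' s ≤ A * B + B * Y s) :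
    Y t + A ≤ (Y 0 + A) * Real.exp (B * t) := by
  have hW : AntitoneOn (fun s => (Y s + A) * Real.exp (-(B * s))) (Icc 0 t) := by
    have hd2 : ∀ s ∈ Ioo 0 t, HasDerivAt (fun s => (Y s + A) * Real.exp (-(B * s)))
        ((Y' s - B * (Y s + A)) * Real.exp (-(B * s))) s := by
      intro s hs
      have e : HasDerivAt (fun s => Real.exp (-(B * s))) (Real.exp (-(B * s)) * (-(B * 1))) s :=
        (((hasDerivAt_id s).const_mul B).neg).exp
      exact (((hd s hs).add_const A).mul e).congr_deriv (by ring)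
    apply antitoneOn_of_deriv_nonpos (convex_Icc 0 t)
    · exact (hc.add continuousOn_const).mul (by fun_prop)
    · rw [interior_Icc]
      exact fun s hs => (hd2 s hs).differentiableAt.differentiableWithinAt
    · rw [interior_Icc]
      intro s hs
      rw [(hd2 s hs).deriv]
      refine mul_nonpos_of_nonpos_of_nonneg ?_ (Real.exp_pos _).le
      have := hb s hs
      linarith
  have h := hW ⟨le_rfl, ht.le⟩ ⟨ht.le, le_rfl⟩ ht.le
  simp only [mul_zero, neg_zero, Real.exp_zero, mul_one] at h
  have h2 := mul_le_mul_of_nonneg_right h (Real.exp_pos (B * t)).le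
  rw [mul_assoc, ← Real.exp_add] at h2
  simp only [neg_add_cancel, Real.exp_zero, mul_one] at h2
  exact h2

/-- the general (unscaled) energy estimate -/
lemma energy_est (S : IsClassicalFSISolution ϱ δ β T f1 f2 v1 v2 pr η η0) (hϱ : 0 < ϱ)
    (hδ : 0 < δ) (hβ : 0 < β) {Cf : ℝ} (hCf : 0 < Cf)
    (hf : ∀ q : ℝ × ℝ × ℝ, f1 q ^ 2 + f2 q ^ 2 ≤ Cf ^ 2) {V : ℝ}
    (hVdef : V = ∫ x in (0:ℝ)..1, η0 x) (hV : 0 ≤ V) {t : ℝ} (ht : t ∈ Ioo 0 T) :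
    domInt η (h0 v1 v2) t + (ϱ / 2 * (∫ x in (0:ℝ)..1, (eT η (x, t)) ^ 2)
        + β / 2 * (∫ x in (0:ℝ)..1, (eX (eX η) (x, t)) ^ 2))
      + (1 / 2 * (∫ s in (0:ℝ)..t, domInt η (gradSq v1 v2) s)
        + δ * (∫ s in (0:ℝ)..t, ∫ x in (0:ℝ)..1, (eT (eX η) (x, s)) ^ 2))
    ≤ (β / 2 * (∫ x in (0:ℝ)..1, (deriv (deriv η0) x) ^ 2) + β * V ^ 2 / 2)
        * Real.exp (4 * Cf ^ 2 * V / β * t) := by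
  have a1 : Sm v1 := S.smooth_v1
  have a2 : Sm v2 := S.smooth_v2
  have a3 : Sm pr := S.smooth_pr
  have aη : Sm η := S.smooth_η
  obtain ⟨k0, -, -, -, -, -⟩ := sm_all a1 a2 a3
  have cT := aη.eT.continuous
  have cXX := aη.eX.eX.continuous
  have cTX := aη.eX.eT.continuous
  have cD0 := domInt_cont aη k0.continuous
  have cG := domInt_cont aη (gradSq_cont a1 a2)
  have l1 := line_cont (F := fun q => (eT η q) ^ 2) (by fun_prop)
  have l2 := line_cont (F := fun q => (eX (eX η) q) ^ 2) (by fun_prop)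
  have l3 := line_cont (F := fun q => (eT (eX η) q) ^ 2) (by fun_prop)
  set Y : ℝ → ℝ := fun t => domInt η (h0 v1 v2) t + (ϱ / 2 * (∫ x in (0:ℝ)..1, (eT η (x, t)) ^ 2)
        + β / 2 * (∫ x in (0:ℝ)..1, (eX (eX η) (x, t)) ^ 2))
      + (1 / 2 * (∫ s in (0:ℝ)..t, domInt η (gradSq v1 v2) s)
        + δ * (∫ s in (0:ℝ)..t, ∫ x in (0:ℝ)..1, (eT (eX η) (x, s)) ^ 2)) with hY
  have d1 : ∀ t, HasDerivAt (fun t => ∫ s in (0:ℝ)..t, domInt η (gradSq v1 v2) s)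
      (domInt η (gradSq v1 v2) t) t := fun t => cG.integral_hasStrictDerivAt 0 t |>.hasDerivAt
  have d2 : ∀ t, HasDerivAt (fun t => ∫ s in (0:ℝ)..t, ∫ x in (0:ℝ)..1, (eT (eX η) (x, s)) ^ 2)
      (∫ x in (0:ℝ)..1, (eT (eX η) (x, t)) ^ 2) t :=
    fun t => l3.integral_hasStrictDerivAt 0 t |>.hasDerivAt
  have c1 : Continuous (fun t => ∫ s in (0:ℝ)..t, domInt η (gradSq v1 v2) s) :=
    continuous_iff_continuousAt.2 fun t => (d1 t).continuousAt
  have c2 : Continuous (fun t => ∫ s in (0:ℝ)..t, ∫ x in (0:ℝ)..1, (eT (eX η) (x, s)) ^ 2) :=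
    continuous_iff_continuousAt.2 fun t => (d2 t).continuousAt
  have cY : Continuous Y :=
    (cD0.add ((l1.const_mul _).add (l2.const_mul _))).add ((c1.const_mul _).add (c2.const_mul _))
  have G := gronwall_lin (Y := Y) (t := t) (A := β * V ^ 2 / 2) (B := 4 * Cf ^ 2 * V / β) ht.1
    cY.continuousOn (fun s hs => (energy_id S ⟨hs.1, hs.2.trans ht.2⟩).add
      (((d1 s).const_mul (1 / 2)).add ((d2 s).const_mul δ))) (by
      intro s hs
      have hsT : s ∈ Ioo 0 T := ⟨hs.1, hs.2.trans ht.2⟩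
      have D := dom_bound S hCf hf hsT
      rw [← hVdef] at D
      set K := ∫ x in (0:ℝ)..1, (eX (eX η) (x, s)) ^ 2 with hK
      have n0 := dom_nonneg S (Ioo_subset_Icc_self hsT) (g := h0 v1 v2)
        (fun q => by unfold h0; nlinarith [mul_self_nonneg (v1 q), mul_self_nonneg (v2 q)])
      have n1 : 0 ≤ ∫ x in (0:ℝ)..1, (eT η (x, s)) ^ 2 :=
        intervalIntegral.integral_nonneg zero_le_one fun _ _ => sq_nonneg _
      have n2 : 0 ≤ ∫ s in (0:ℝ)..s, domInt η (gradSq v1 v2) s :=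
        intervalIntegral.integral_nonneg hs.1.le fun u hu =>
          dom_nonneg S ⟨hu.1, hu.2.trans hsT.2.le⟩ (fun q => by unfold gradSq; positivity)
      have n3 : 0 ≤ ∫ s in (0:ℝ)..s, ∫ x in (0:ℝ)..1, (eT (eX η) (x, s)) ^ 2 :=
        intervalIntegral.integral_nonneg hs.1.le fun u hu =>
          intervalIntegral.integral_nonneg zero_le_one fun _ _ => sq_nonneg _
      have hYK : β / 2 * K ≤ Y s := by
        simp only [hY, ← hK]
        have m1 := mul_nonneg hϱ.le n1
        have m2 := mul_nonneg hδ.le n3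
        linarith
      have hYB := mul_le_mul_of_nonneg_left hYK (by positivity : 0 ≤ 4 * Cf ^ 2 * V / β)
      have e1 : 4 * Cf ^ 2 * V / β * (β / 2 * K) = Cf ^ 2 * V * 2 * K := by
        field_simp; ring
      have e2 : β * V ^ 2 / 2 * (4 * Cf ^ 2 * V / β) = Cf ^ 2 * V * (2 * V ^ 2) := by
        field_simp; ring
      rw [e1] at hYB
      rw [e2]
      linarith)
  have hY0 : Y 0 = β / 2 * (∫ x in (0:ℝ)..1, (deriv (deriv η0) x) ^ 2) := by
    have z1 : domInt η (h0 v1 v2) 0 = 0 := by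
      simp [domInt, colInt, h0, S.init_v]
    have z2 : ∀ x, eX η (x, 0) = deriv η0 x := by
      intro x
      rw [← (aη.hx x 0).deriv]
      simp_rw [S.init_η]
    have z3 : ∀ x, eX (eX η) (x, 0) = deriv (deriv η0) x := by
      intro x
      rw [← (aη.eX.hx x 0).deriv]
      simp_rw [z2]
    simp only [hY, z1, z3, S.init_ηt]
    simp
  rw [hY0] at G
  have : 0 ≤ β * V ^ 2 / 2 := by positivity
  change Y t ≤ _
  linarith

end est

end helpers

/-- Proposition 2.2, the key quantitative energy estimate (2.11) under
the scaling assumptions (S1)–(S4), in the original time variable.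
For `r ∈ [1,3]`, hatted coefficients `ϱ̂, δ̂, β̂ > 0`, a positive 1-periodic C⁴ initial
displacement `η₀` and a force bound `C_f`, there are `C > 0` and `ε₀ ∈ (0,1]` such that
for all `ε ∈ (0,ε₀]`: every classical solution of the FSI problem on `[0, ε⁻²T]` with
coefficients `ϱ = ϱ̂ε`, `δ = δ̂ε⁻ʳ`, `β = β̂ε⁻¹`, initial displacement `ε·η₀` and force
with `sup|f| ≤ C_f` satisfies, for every `t ∈ (0, ε⁻²T)`,
`(1/2)‖v(t)‖² + (1/2)∫₀ᵗ‖∇v‖² + (ϱ̂ε/2)‖∂ₜη(t)‖² + δ̂ε⁻ʳ∫₀ᵗ‖∂ₜ∂ₓη‖²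
  + (β̂/(2ε))‖∂ₓ²η(t)‖² ≤ C·ε`. -/
theorem stmt_8 (r : ℝ) (hr : r ∈ Icc (1:ℝ) 3)
    (ϱ δ β : ℝ) (hϱ : 0 < ϱ) (hδ : 0 < δ) (hβ : 0 < β)
    (η0 : ℝ → ℝ) (hη0 : ContDiff ℝ 4 η0) (hη0per : ∀ x, η0 (x + 1) = η0 x)
    (hη0pos : ∀ x, 0 < η0 x)
    (Cf T : ℝ) (hCf : 0 < Cf) (hT : 0 < T) :
    ∃ C > (0:ℝ), ∃ ε₀ ∈ Ioc (0:ℝ) 1, ∀ ε ∈ Ioc (0:ℝ) ε₀,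
      ∀ (f1 f2 v1 v2 pr : ℝ × ℝ × ℝ → ℝ) (η : ℝ × ℝ → ℝ),
        IsClassicalFSISolution (ϱ * ε) (δ * ε ^ (-r)) (β / ε) (T / ε ^ 2)
          f1 f2 v1 v2 pr η (fun x => ε * η0 x) →
        (∀ q : ℝ × ℝ × ℝ, f1 q ^ 2 + f2 q ^ 2 ≤ Cf ^ 2) →
        ∀ t ∈ Ioo (0:ℝ) (T / ε ^ 2),
          1 / 2 * (∫ p in {p : ℝ × ℝ | p.1 ∈ Ioo (0:ℝ) 1 ∧ p.2 ∈ Ioo 0 (η (p.1, t))},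
              (v1 (p.1, p.2, t) ^ 2 + v2 (p.1, p.2, t) ^ 2))
          + 1 / 2 * (∫ s in (0:ℝ)..t,
              ∫ p in {p : ℝ × ℝ | p.1 ∈ Ioo (0:ℝ) 1 ∧ p.2 ∈ Ioo 0 (η (p.1, s))},
                ((dX v1 (p.1, p.2, s)) ^ 2 + (dZ v1 (p.1, p.2, s)) ^ 2
                  + (dX v2 (p.1, p.2, s)) ^ 2 + (dZ v2 (p.1, p.2, s)) ^ 2))
          + ϱ * ε / 2 * (∫ x in (0:ℝ)..1, (eT η (x, t)) ^ 2)
          + δ * ε ^ (-r) * (∫ s in (0:ℝ)..t, ∫ x in (0:ℝ)..1, (eT (eX η) (x, s)) ^ 2)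
          + β / (2 * ε) * (∫ x in (0:ℝ)..1, (eX (eX η) (x, t)) ^ 2)
        ≤ C * ε := by
  set V := ∫ x in (0:ℝ)..1, η0 x with hV
  set D := ∫ x in (0:ℝ)..1, (deriv (deriv η0) x) ^ 2 with hD
  have hVpos : 0 < V := intervalIntegral.intervalIntegral_pos_of_pos
    (hη0.continuous.intervalIntegrable _ _) hη0pos zero_lt_one
  have hDpos : 0 ≤ D := intervalIntegral.integral_nonneg zero_le_one fun _ _ => sq_nonneg _
  refine ⟨(β / 2 * D + β * V ^ 2 / 2) * Real.exp (4 * Cf ^ 2 * V * T / β), by positivity, 1,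
    by simp, ?_⟩
  rintro ε ⟨hε, -⟩ f1 f2 v1 v2 pr η S hf t ht
  have hr' : 0 < ε ^ (-r) := Real.rpow_pos_of_pos hε _
  have aη : Sm η := S.smooth_η
  have a1 : Sm v1 := S.smooth_v1
  have a2 : Sm v2 := S.smooth_v2
  have E := energy_est S (by positivity) (by positivity) (by positivity) hCf hf
    (V := ε * V) (by rw [intervalIntegral.integral_const_mul]) (by positivity) ht
  have e1 : ∀ x, deriv (deriv (fun x => ε * η0 x)) x = ε * deriv (deriv η0) x := by
    intro x
    have : deriv (fun x => ε * η0 x) = fun x => ε * deriv η0 x := by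
      ext y; exact deriv_const_mul_field ε
    rw [this]; exact deriv_const_mul_field ε
  simp_rw [e1, mul_pow] at E
  rw [intervalIntegral.integral_const_mul, ← hD] at E
  have hIcc : ∀ s ∈ Icc 0 t, s ∈ Icc 0 (T / ε ^ 2) := fun s hs => ⟨hs.1, hs.2.trans ht.2.le⟩
  have q1 := setInt_eq (g := fun q => v1 q ^ 2 + v2 q ^ 2) aη.continuous
    (by have := a1.continuous; have := a2.continuous; fun_prop)
    (fun x => S.η_pos x t (hIcc t ⟨ht.1.le, le_rfl⟩))
  have q2 : ∀ s ∈ uIcc 0 t, (∫ p in {p : ℝ × ℝ | p.1 ∈ Ioo (0:ℝ) 1 ∧ p.2 ∈ Ioo 0 (η (p.1, s))},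
                ((dX v1 (p.1, p.2, s)) ^ 2 + (dZ v1 (p.1, p.2, s)) ^ 2
                  + (dX v2 (p.1, p.2, s)) ^ 2 + (dZ v2 (p.1, p.2, s)) ^ 2))
      = domInt η (gradSq v1 v2) s := by
    intro s hs
    rw [uIcc_of_le ht.1.le] at hs
    exact setInt_eq aη.continuous (gradSq_cont a1 a2) (fun x => S.η_pos x s (hIcc s hs))
  have q3 : domInt η (h0 v1 v2) t = 1 / 2 * domInt η (fun q => v1 q ^ 2 + v2 q ^ 2) t := by
    unfold domInt
    rw [← intervalIntegral.integral_const_mul]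
    congr 1; ext x
    unfold colInt
    rw [← intervalIntegral.integral_const_mul]
    congr 1; ext z
    simp only [h0]; ring
  rw [q1, intervalIntegral.integral_congr q2, ← q3]
  have hexp : Real.exp (4 * Cf ^ 2 * (ε * V) / (β / ε) * t)
      ≤ Real.exp (4 * Cf ^ 2 * V * T / β) := by
    apply Real.exp_le_exp.2
    have h1 : t * ε ^ 2 ≤ T := by
      have := ht.2
      rw [lt_div_iff₀ (by positivity)] at this
      exact this.le
    calc 4 * Cf ^ 2 * (ε * V) / (β / ε) * t = 4 * Cf ^ 2 * V / β * (t * ε ^ 2) := by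
          field_simp
      _ ≤ 4 * Cf ^ 2 * V / β * T := by gcongr
      _ = _ := by ring
  have hpre : β / ε / 2 * (ε ^ 2 * D) + β / ε * (ε ^ 2 * V ^ 2) / 2
      = (β / 2 * D + β * V ^ 2 / 2) * ε := by
    field_simp
  rw [hpre] at E
  have hfin := mul_le_mul_of_nonneg_left hexp
    (by positivity : 0 ≤ (β / 2 * D + β * V ^ 2 / 2) * ε)
  have hb : β / (2 * ε) = β / ε / 2 := by field_simp
  rw [hb]
  calc _ = _ := by ring
    _ ≤ _ := E
    _ ≤ _ := hfin
    _ = _ := by ring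

end
end

section
/- Let T > 0, let η : ℝ×[0,T] → (0,∞) be C¹ and 1-periodic in x, and let v = (v₁,v₂) be C¹ on the closed moving domain {(x,z,t) : 0 ≤ z ≤ η(x,t)}, 1-periodic in x, satisfying div v = ∂ₓv₁ + ∂_z v₂ = 0 on Ω_η(t), v(x,0,t) = 0, and v(x, η(x,t), t) = (0, ∂_tη(x,t)). Then for every 1-periodic C¹ function φ : ℝ → ℝ and every t ∈ [0,T]: | ∫₀¹ ∂_tη(x,t)·φ(x) dx | ≤ ( sup_x η(x,t) )^{1/2} · ( ∫_{Ω_η(t)} v₁² dx dz )^{1/2} · ( ∫₀¹ (φ'(x))² dx )^{1/2}. -/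
open MeasureTheory Set intervalIntegral

theorem aux_leibniz (G G' : ℝ → ℝ → ℝ) (hG : Continuous G.uncurry) (hG' : Continuous G'.uncurry)
    (hd : ∀ x s, HasDerivAt (fun y => G y s) (G' x s) x) (x₀ : ℝ) :
    HasDerivAt (fun x => ∫ s in (0:ℝ)..1, G x s) (∫ s in (0:ℝ)..1, G' x₀ s) x₀ := by
  obtain ⟨C, hC⟩ := ((isCompact_Icc (a := x₀ - 1) (b := x₀ + 1)).prod
    (isCompact_Icc (a := (0:ℝ)) (b := 1))).exists_bound_of_continuousOn hG'.continuousOn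
  have c1 : ∀ x, Continuous (G x) := fun x =>
    hG.comp (Continuous.prodMk continuous_const continuous_id)
  have c2 : ∀ x, Continuous (G' x) := fun x =>
    hG'.comp (Continuous.prodMk continuous_const continuous_id)
  refine (intervalIntegral.hasDerivAt_integral_of_dominated_loc_of_deriv_le
    (bound := fun _ => C) (F := G) (F' := G')
    (Icc_mem_nhds (a := x₀ - 1) (b := x₀ + 1) (by linarith) (by linarith))
    (Filter.Eventually.of_forall fun x => (c1 x).aestronglyMeasurable)
    ((c1 x₀).intervalIntegrable _ _) (c2 x₀).aestronglyMeasurable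
    (Filter.Eventually.of_forall fun s hs x hx => ?_) (by simp)
    (Filter.Eventually.of_forall fun s hs x hx => hd x s)).2
  rw [uIoc_of_le zero_le_one] at hs
  exact hC (x, s) ⟨hx, hs.1.le, hs.2⟩

theorem aux_cs (f g : ℝ → ℝ) (hf : Continuous f) (hg : Continuous g) (a b : ℝ) (hab : a ≤ b) :
    (∫ x in a..b, f x * g x) ^ 2 ≤ (∫ x in a..b, f x ^ 2) * ∫ x in a..b, g x ^ 2 := by
  have key : ∀ c : ℝ, 0 ≤ (∫ x in a..b, f x ^ 2) * (c * c) + (2 * ∫ x in a..b, f x * g x) * c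
      + ∫ x in a..b, g x ^ 2 := by
    intro c
    have h0 : 0 ≤ ∫ x in a..b, (c * f x + g x) ^ 2 :=
      intervalIntegral.integral_nonneg hab fun x _ => sq_nonneg _
    have h1 : ∫ x in a..b, (c * f x + g x) ^ 2
        = ∫ x in a..b, ((c * c) * f x ^ 2 + (2 * c) * (f x * g x) + g x ^ 2) := by
      congr 1; ext x; ring
    rw [h1, intervalIntegral.integral_add, intervalIntegral.integral_add,
      intervalIntegral.integral_const_mul, intervalIntegral.integral_const_mul] at h0
    · linarith
    all_goals exact Continuous.intervalIntegrable (by fun_prop) _ _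
  have := discrim_le_zero key
  rw [discrim] at this
  nlinarith

theorem aux_flux (h : ℝ → ℝ) (hh : ContDiff ℝ 1 h) (hpos : ∀ x, 0 < h x)
    (u w : ℝ × ℝ → ℝ) (hu : ContDiff ℝ 1 u) (hw : ContDiff ℝ 1 w)
    (hdiv : ∀ x z, z ∈ Ioo 0 (h x) → fderiv ℝ u (x, z) (1, 0) + fderiv ℝ w (x, z) (0, 1) = 0)
    (hw0 : ∀ x, w (x, 0) = 0) (hu1 : ∀ x, u (x, h x) = 0) (x₀ : ℝ) :
    HasDerivAt (fun x => ∫ z in (0:ℝ)..h x, u (x, z)) (- w (x₀, h x₀)) x₀ := by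
  have hhc := hh.continuous
  have huc := hu.continuous
  have hwc := hw.continuous
  have hh'c : Continuous (deriv h) := hh.continuous_deriv le_rfl
  have hu'c : Continuous (fderiv ℝ u) := hu.continuous_fderiv one_ne_zero
  have hhd : ∀ x, HasDerivAt h (deriv h x) x := fun x =>
    (hh.differentiable one_ne_zero x).hasDerivAt
  have hud : ∀ p, HasFDerivAt u (fderiv ℝ u p) p := fun p =>
    (hu.differentiable one_ne_zero p).hasFDerivAt
  have hwd : ∀ p, HasFDerivAt w (fderiv ℝ w p) p := fun p =>
    (hw.differentiable one_ne_zero p).hasFDerivAt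
  have e1 : (fun x => ∫ z in (0:ℝ)..h x, u (x, z))
      = fun x => ∫ s in (0:ℝ)..1, h x * u (x, h x * s) := by
    ext x
    rw [intervalIntegral.integral_const_mul,
      intervalIntegral.mul_integral_comp_mul_left (f := fun z => u (x, z))]
    simp
  rw [e1]
  set G' : ℝ → ℝ → ℝ := fun x s => deriv h x * u (x, h x * s)
    + h x * fderiv ℝ u (x, h x * s) (1, deriv h x * s) with hG'
  have hG'c : Continuous G'.uncurry := by
    simp only [hG', Function.uncurry_def]
    fun_prop
  have L := aux_leibniz (fun x s => h x * u (x, h x * s)) G'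
    (by simp only [Function.uncurry_def]; fun_prop) hG'c
    (fun x s => by
      have i : HasDerivAt (fun y => (y, h y * s)) ((1:ℝ), deriv h x * s) x :=
        (hasDerivAt_id x).prodMk ((hhd x).mul_const s)
      exact (hhd x).mul ((hud (x, h x * s)).comp_hasDerivAt x i)) x₀
  convert L using 1
  have F := intervalIntegral.integral_eq_sub_of_hasDerivAt_of_le (a := 0) (b := 1)
    (f := fun s => s * deriv h x₀ * u (x₀, h x₀ * s) - w (x₀, h x₀ * s)) (f' := G' x₀)
    zero_le_one (by fun_prop) (fun s hs => by
      have i : HasDerivAt (fun s => (x₀, h x₀ * s)) ((0:ℝ), h x₀ * 1) s :=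
        (hasDerivAt_const s x₀).prodMk ((hasDerivAt_id s).const_mul (h x₀))
      have d1 := (((hasDerivAt_id s).mul_const (deriv h x₀)).mul
        ((hud (x₀, h x₀ * s)).comp_hasDerivAt s i)).sub ((hwd (x₀, h x₀ * s)).comp_hasDerivAt s i)
      refine d1.congr_deriv ?_
      have hp := hpos x₀
      have dv := hdiv x₀ (h x₀ * s) ⟨mul_pos hp hs.1, by nlinarith [hs.2]⟩
      have a1 : ((0:ℝ), h x₀ * 1) = h x₀ • ((0:ℝ), (1:ℝ)) := by simp
      have a2 : ((1:ℝ), deriv h x₀ * s) = ((1:ℝ), (0:ℝ)) + (deriv h x₀ * s) • ((0:ℝ), (1:ℝ)) := by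
        simp
      simp only [hG', a1, a2, map_add, map_smul, smul_eq_mul, id, Function.comp]
      linear_combination (- h x₀) * dv)
    ((hG'c.comp (Continuous.prodMk continuous_const continuous_id)).intervalIntegrable _ _)
  rw [F]
  simp [hw0, hu1]

/-- duality estimate at the core of Proposition 4.1, the uniform
`L²(0,T;H⁻¹)` bound on `∂ₜη`. Under incompressibility, no-slip and the kinematic
condition, for every 1-periodic C¹ test function `φ` and every `t ∈ [0,T]`,
`|∫₀¹ ∂ₜη(x,t) φ(x) dx| ≤ (sup_x η(x,t))^{1/2} (∫_{Ω_η(t)} v₁²)^{1/2} (∫₀¹ (φ')²)^{1/2}`. -/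
theorem stmt_14 (T : ℝ) (hT : 0 < T)
    (η : ℝ × ℝ → ℝ) (hη : ContDiff ℝ 1 η)
    (hηper : ∀ x t, η (x + 1, t) = η (x, t))
    (hpos : ∀ x t, t ∈ Icc (0:ℝ) T → 0 < η (x, t))
    (v1 v2 : ℝ × ℝ × ℝ → ℝ) (hv1 : ContDiff ℝ 1 v1) (hv2 : ContDiff ℝ 1 v2)
    (hvper : ∀ x z t, v1 (x + 1, z, t) = v1 (x, z, t) ∧ v2 (x + 1, z, t) = v2 (x, z, t))
    (hdiv : ∀ x z t, t ∈ Icc (0:ℝ) T → z ∈ Ioo 0 (η (x, t)) →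
      fderiv ℝ v1 (x, z, t) (1, 0, 0) + fderiv ℝ v2 (x, z, t) (0, 1, 0) = 0)
    (hnoslip : ∀ x t, t ∈ Icc (0:ℝ) T → v1 (x, 0, t) = 0 ∧ v2 (x, 0, t) = 0)
    (hkin : ∀ x t, t ∈ Icc (0:ℝ) T →
      v1 (x, η (x, t), t) = 0 ∧ v2 (x, η (x, t), t) = fderiv ℝ η (x, t) (0, 1))
    (φ : ℝ → ℝ) (hφ : ContDiff ℝ 1 φ) (hφper : ∀ x, φ (x + 1) = φ x) :
    ∀ t ∈ Icc (0:ℝ) T,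
      |∫ x in (0:ℝ)..1, fderiv ℝ η (x, t) (0, 1) * φ x|
        ≤ Real.sqrt (⨆ x : Icc (0:ℝ) 1, η (x.1, t))
          * Real.sqrt (∫ x in (0:ℝ)..1, ∫ z in (0:ℝ)..(η (x, t)), (v1 (x, z, t)) ^ 2)
          * Real.sqrt (∫ x in (0:ℝ)..1, (deriv φ x) ^ 2) := by
  intro t ht
  have hhC : ContDiff ℝ 1 (fun x : ℝ => η (x, t)) := by fun_prop
  have huC : ContDiff ℝ 1 (fun p : ℝ × ℝ => v1 (p.1, p.2, t)) := by fun_prop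
  have hwC : ContDiff ℝ 1 (fun p : ℝ × ℝ => v2 (p.1, p.2, t)) := by fun_prop
  have hφ' : Continuous (deriv φ) := hφ.continuous_deriv le_rfl
  have hη' : Continuous (fun x => fderiv ℝ η (x, t) (0, 1)) := by
    have := hη.continuous_fderiv one_ne_zero
    fun_prop
  have hfd : ∀ v : ℝ × ℝ × ℝ → ℝ, ContDiff ℝ 1 v → ∀ x z a b,
      fderiv ℝ (fun p : ℝ × ℝ => v (p.1, p.2, t)) (x, z) (a, b) = fderiv ℝ v (x, z, t) (a, b, 0) := by
    intro v hv x z a b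
    have i : HasFDerivAt (fun p : ℝ × ℝ => (p.1, p.2, t))
        ((ContinuousLinearMap.fst ℝ ℝ ℝ).prod ((ContinuousLinearMap.snd ℝ ℝ ℝ).prod 0)) (x, z) :=
      hasFDerivAt_fst.prodMk (hasFDerivAt_snd.prodMk (hasFDerivAt_const t _))
    have := ((hv.differentiable one_ne_zero (x, z, t)).hasFDerivAt).comp (x, z) i
    have e := this.fderiv
    simp only [Function.comp_def] at e
    rw [e]
    simp
  set F : ℝ → ℝ := fun x => ∫ z in (0:ℝ)..η (x, t), v1 (x, z, t) with hF
  have hFd : ∀ x, HasDerivAt F (- fderiv ℝ η (x, t) (0, 1)) x := by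
    intro x
    have := aux_flux (fun x => η (x, t)) hhC (fun x => hpos x t ht) _ _ huC hwC
      (fun x z hz => by rw [hfd v1 hv1, hfd v2 hv2]; exact hdiv x z t ht hz)
      (fun x => (hnoslip x t ht).2) (fun x => (hkin x t ht).1) x
    simpa only [(hkin x t ht).2] using this
  have hFc : Continuous F := continuous_iff_continuousAt.2 fun x => (hFd x).continuousAt
  have hF1 : F 1 = F 0 := by
    have a := hηper 0 t
    have b := fun z => (hvper 0 z t).1
    rw [zero_add] at a
    simp only [zero_add] at b
    simp only [hF, a, b]
  have hφ1 : φ 1 = φ 0 := by simpa using hφper 0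
  have ibp := intervalIntegral.integral_mul_deriv_eq_deriv_mul (a := 0) (b := 1) (u := F) (v := φ)
    (u' := fun x => - fderiv ℝ η (x, t) (0, 1)) (v' := deriv φ)
    (fun x _ => hFd x) (fun x _ => (hφ.differentiable one_ne_zero x).hasDerivAt)
    (hη'.neg.intervalIntegrable _ _) (hφ'.intervalIntegrable _ _)
  have e : ∫ x in (0:ℝ)..1, fderiv ℝ η (x, t) (0, 1) * φ x = ∫ x in (0:ℝ)..1, F x * deriv φ x := by
    rw [ibp, hF1, hφ1]
    simp
  set M := ⨆ x : Icc (0:ℝ) 1, η (x.1, t) with hM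
  have hηc : Continuous (fun x : ℝ => η (x, t)) := hhC.continuous
  have hv1c := hv1.continuous
  have hbdd : BddAbove (range fun x : Icc (0:ℝ) 1 => η (x.1, t)) :=
    (isCompact_range (hηc.comp continuous_subtype_val)).bddAbove
  have hle : ∀ x ∈ Icc (0:ℝ) 1, η (x, t) ≤ M := fun x hx => le_ciSup hbdd ⟨x, hx⟩
  have hM0 : 0 ≤ M := (hpos 0 t ht).le.trans (hle 0 (by simp))
  have hQc : Continuous fun x => ∫ z in (0:ℝ)..η (x, t), (v1 (x, z, t)) ^ 2 :=
    continuous_parametric_intervalIntegral_of_continuous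
      (f := fun x z => (v1 (x, z, t)) ^ 2) (by simp only [Function.uncurry_def]; fun_prop) hηc
  have hF2 : ∫ x in (0:ℝ)..1, F x ^ 2
      ≤ M * ∫ x in (0:ℝ)..1, ∫ z in (0:ℝ)..(η (x, t)), (v1 (x, z, t)) ^ 2 := by
    rw [← intervalIntegral.integral_const_mul]
    refine intervalIntegral.integral_mono_on zero_le_one ((hFc.pow 2).intervalIntegrable _ _)
      ((hQc.const_mul M).intervalIntegrable _ _) fun x hx => ?_
    have hp := (hpos x t ht).le
    have c := aux_cs (fun _ => 1) (fun z => v1 (x, z, t)) (by fun_prop) (by fun_prop) 0 (η (x, t)) hp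
    simp only [one_mul, one_pow, intervalIntegral.integral_const, sub_zero, smul_eq_mul,
      mul_one] at c
    exact c.trans (mul_le_mul_of_nonneg_right (hle x hx)
      (intervalIntegral.integral_nonneg hp fun z _ => sq_nonneg _))
  have hφ2 : 0 ≤ ∫ x in (0:ℝ)..1, (deriv φ x) ^ 2 :=
    intervalIntegral.integral_nonneg zero_le_one fun z _ => sq_nonneg _
  have hQ2 : 0 ≤ ∫ x in (0:ℝ)..1, ∫ z in (0:ℝ)..(η (x, t)), (v1 (x, z, t)) ^ 2 :=
    intervalIntegral.integral_nonneg zero_le_one fun x _ =>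
      intervalIntegral.integral_nonneg (hpos x t ht).le fun z _ => sq_nonneg _
  rw [e, ← Real.sqrt_mul hM0, ← Real.sqrt_mul (mul_nonneg hM0 hQ2)]
  apply Real.abs_le_sqrt
  exact (aux_cs F (deriv φ) hFc hφ' 0 1 zero_le_one).trans (mul_le_mul_of_nonneg_right hF2 hφ2)
end

section
/- Let β > 0, T > 0, and let Φ : ℝ×[0,T] → ℝ be smooth and 1-periodic in x. Suppose h₁, h₂ : ℝ×[0,T] → (0,∞) are smooth, 1-periodic in x, bounded below by positive constants, both satisfy the sixth-order thin-film equation ∂_t h = ∂ₓ( h³·( (β/12)·∂ₓ⁵h − Φ ) ) on ℝ×(0,T), and have the same initial data h₁(·,0) = h₂(·,0). Then h₁ = h₂ on ℝ×[0,T]. -/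
open MeasureTheory Set

noncomputable section

/-- Partial derivative in `x` of a field on `ℝ×ℝ` (variables `(x,t)`), as an operator
(so that it can be iterated). -/
def pdx (f : ℝ × ℝ → ℝ) : ℝ × ℝ → ℝ := fun q => fderiv ℝ f q (1, 0)

/-- Partial derivative in `t` of a field on `ℝ×ℝ` (variables `(x,t)`). -/
def pdt (f : ℝ × ℝ → ℝ) : ℝ × ℝ → ℝ := fun q => fderiv ℝ f q (0, 1)

lemma pdx_smooth {f : ℝ × ℝ → ℝ} (hf : ContDiff ℝ (⊤ : ℕ∞) f) :
    ContDiff ℝ (⊤ : ℕ∞) (pdx f) :=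
  (hf.fderiv_right (m := (⊤ : ℕ∞)) (by simp)).clm_apply contDiff_const

lemma pdt_smooth {f : ℝ × ℝ → ℝ} (hf : ContDiff ℝ (⊤ : ℕ∞) f) :
    ContDiff ℝ (⊤ : ℕ∞) (pdt f) :=
  (hf.fderiv_right (m := (⊤ : ℕ∞)) (by simp)).clm_apply contDiff_const

lemma hasDerivAt_x {f : ℝ × ℝ → ℝ} (hf : ContDiff ℝ (⊤ : ℕ∞) f) (x t : ℝ) :
    HasDerivAt (fun y => f (y, t)) (pdx f (x, t)) x := by
  have h1 : HasFDerivAt f (fderiv ℝ f (x, t)) (x, t) :=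
    ((hf.differentiable (by simp)) (x, t)).hasFDerivAt
  have h2 : HasDerivAt (fun y : ℝ => (y, t)) ((1 : ℝ), (0 : ℝ)) x :=
    (hasDerivAt_id x).prodMk (hasDerivAt_const x t)
  exact h1.comp_hasDerivAt x h2

lemma hasDerivAt_t {f : ℝ × ℝ → ℝ} (hf : ContDiff ℝ (⊤ : ℕ∞) f) (x t : ℝ) :
    HasDerivAt (fun s => f (x, s)) (pdt f (x, t)) t := by
  have h1 : HasFDerivAt f (fderiv ℝ f (x, t)) (x, t) :=
    ((hf.differentiable (by simp)) (x, t)).hasFDerivAt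
  have h2 : HasDerivAt (fun s : ℝ => (x, s)) ((0 : ℝ), (1 : ℝ)) t :=
    (hasDerivAt_const t x).prodMk (hasDerivAt_id t)
  exact h1.comp_hasDerivAt t h2

lemma pdx_per {f : ℝ × ℝ → ℝ} (hf : ContDiff ℝ (⊤ : ℕ∞) f)
    (hp : ∀ x t, f (x + 1, t) = f (x, t)) : ∀ x t, pdx f (x + 1, t) = pdx f (x, t) := by
  intro x t
  have h1 := (hasDerivAt_x hf (x + 1) t).comp_add_const x 1
  simp only [hp] at h1
  exact h1.unique (hasDerivAt_x hf x t)

lemma pdt_per {f : ℝ × ℝ → ℝ} (hf : ContDiff ℝ (⊤ : ℕ∞) f)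
    (hp : ∀ x t, f (x + 1, t) = f (x, t)) : ∀ x t, pdt f (x + 1, t) = pdt f (x, t) := by
  intro x t
  have h1 := hasDerivAt_t hf (x + 1) t
  simp only [hp] at h1
  exact h1.unique (hasDerivAt_t hf x t)

lemma pd_comm {f : ℝ × ℝ → ℝ} (hf : ContDiff ℝ (⊤ : ℕ∞) f) : pdt (pdx f) = pdx (pdt f) := by
  funext q
  have hs : IsSymmSndFDerivAt ℝ f q := hf.contDiffAt.isSymmSndFDerivAt (by
    rw [minSmoothness_of_isRCLikeNormedField]; exact WithTop.coe_le_coe.2 (le_top : (2 : ℕ∞) ≤ ⊤))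
  have hd : DifferentiableAt ℝ (fderiv ℝ f) q :=
    ((hf.fderiv_right (m := (⊤ : ℕ∞)) (by simp)).differentiable (by simp)) q
  have e : ∀ v u : ℝ × ℝ, fderiv ℝ (fun p => fderiv ℝ f p v) q u = fderiv ℝ (fderiv ℝ f) q u v := by
    intro v u
    rw [fderiv_clm_apply hd (differentiableAt_const v)]
    simp
  change fderiv ℝ (fun p => fderiv ℝ f p (1, 0)) q (0, 1)
    = fderiv ℝ (fun p => fderiv ℝ f p (0, 1)) q (1, 0)
  rw [e, e]
  exact hs _ _

lemma pdx_sub {f g : ℝ × ℝ → ℝ} (hf : ContDiff ℝ (⊤ : ℕ∞) f) (hg : ContDiff ℝ (⊤ : ℕ∞) g) :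
    pdx (fun q => f q - g q) = fun q => pdx f q - pdx g q := by
  funext ⟨x, t⟩
  exact (hasDerivAt_x (hf.sub hg) x t).unique ((hasDerivAt_x hf x t).sub (hasDerivAt_x hg x t))

lemma pdt_sub {f g : ℝ × ℝ → ℝ} (hf : ContDiff ℝ (⊤ : ℕ∞) f) (hg : ContDiff ℝ (⊤ : ℕ∞) g) :
    pdt (fun q => f q - g q) = fun q => pdt f q - pdt g q := by
  funext ⟨x, t⟩
  exact (hasDerivAt_t (hf.sub hg) x t).unique ((hasDerivAt_t hf x t).sub (hasDerivAt_t hg x t))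

lemma hasDerivAt_energy {e : ℝ × ℝ → ℝ} (he : ContDiff ℝ (⊤ : ℕ∞) e) (t : ℝ) :
    HasDerivAt (fun s => ∫ x in (0:ℝ)..1, e (x, s)) (∫ x in (0:ℝ)..1, pdt e (x, t)) t := by
  have hc : Continuous e := he.continuous
  have hc' : Continuous (pdt e) := (pdt_smooth he).continuous
  obtain ⟨K, hK⟩ := ((isCompact_Icc (a := (0:ℝ)) (b := 1)).prod
    (isCompact_Icc (a := t - 1) (b := t + 1))).exists_bound_of_continuousOn hc'.continuousOn
  refine (intervalIntegral.hasDerivAt_integral_of_dominated_loc_of_deriv_le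
    (F := fun s x => e (x, s)) (F' := fun s x => pdt e (x, s)) (s := Icc (t - 1) (t + 1))
    (bound := fun _ => K) (Icc_mem_nhds (by linarith) (by linarith)) ?_ ?_ ?_ ?_ ?_ ?_).2
  · refine Filter.Eventually.of_forall fun s => ?_
    exact (by fun_prop : Continuous fun x : ℝ => e (x, s)).aestronglyMeasurable
  · exact (by fun_prop : Continuous fun x : ℝ => e (x, t)).intervalIntegrable _ _
  · exact (by fun_prop : Continuous fun x : ℝ => pdt e (x, t)).aestronglyMeasurable
  · refine Filter.Eventually.of_forall fun x hx s hs => hK (x, s) ⟨?_, hs⟩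
    rw [uIoc_of_le zero_le_one] at hx
    exact ⟨hx.1.le, hx.2⟩
  · exact intervalIntegrable_const
  · exact Filter.Eventually.of_forall fun x _ s _ => hasDerivAt_t he x s

lemma energy_zero {e H : ℝ × ℝ → ℝ} (he : ContDiff ℝ (⊤ : ℕ∞) e) (hH : ContDiff ℝ (⊤ : ℕ∞) H)
    (hHp : ∀ x t, H (x + 1, t) = H (x, t)) (hpos : ∀ q, 0 ≤ e q) (h0 : ∀ x, e (x, 0) = 0)
    (C T : ℝ) (hineq : ∀ x ∈ Icc (0:ℝ) 1, ∀ t ∈ Ioo (0:ℝ) T,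
      pdt e (x, t) ≤ pdx H (x, t) + C * e (x, t)) :
    ∀ x ∈ Icc (0:ℝ) 1, ∀ t ∈ Icc (0:ℝ) T, e (x, t) = 0 := by
  intro x hx t ht
  have hc : Continuous e := he.continuous
  have hct : Continuous (pdt e) := (pdt_smooth he).continuous
  have hcH : Continuous (pdx H) := (pdx_smooth hH).continuous
  set E : ℝ → ℝ := fun s => ∫ x in (0:ℝ)..1, e (x, s) with hE
  have hd : ∀ s, HasDerivAt (fun s => E s * Real.exp (-C * s))
      ((∫ x in (0:ℝ)..1, pdt e (x, s)) * Real.exp (-C * s)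
        + E s * (Real.exp (-C * s) * (-C))) s := by
    intro s
    have h2 : HasDerivAt (fun s : ℝ => -C * s) (-C) s := by
      simpa using (hasDerivAt_id s).const_mul (-C)
    exact (hasDerivAt_energy he s).mul h2.exp
  have hle : ∀ s ∈ Ioo (0:ℝ) T, (∫ x in (0:ℝ)..1, pdt e (x, s)) ≤ C * E s := by
    intro s hs
    have i1 : IntervalIntegrable (fun x => pdx H (x, s)) volume 0 1 :=
      (by fun_prop : Continuous fun x : ℝ => pdx H (x, s)).intervalIntegrable _ _
    have i2 : IntervalIntegrable (fun x => C * e (x, s)) volume 0 1 :=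
      (by fun_prop : Continuous fun x : ℝ => C * e (x, s)).intervalIntegrable _ _
    have i3 : IntervalIntegrable (fun x => pdt e (x, s)) volume 0 1 :=
      (by fun_prop : Continuous fun x : ℝ => pdt e (x, s)).intervalIntegrable _ _
    have z : ∫ x in (0:ℝ)..1, pdx H (x, s) = 0 := by
      rw [intervalIntegral.integral_eq_sub_of_hasDerivAt (f := fun x => H (x, s))
        (fun x _ => hasDerivAt_x hH x s) i1]
      have := hHp 0 s
      rw [zero_add] at this
      simp [this]
    have := intervalIntegral.integral_mono_on zero_le_one i3 (i1.add i2)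
      (fun x hx => hineq x hx s hs)
    rw [intervalIntegral.integral_add i1 i2, z, intervalIntegral.integral_const_mul] at this
    simpa [hE] using this
  have hanti : AntitoneOn (fun s => E s * Real.exp (-C * s)) (Icc 0 T) := by
    refine antitoneOn_of_deriv_nonpos (convex_Icc _ _)
      (fun s _ => (hd s).continuousAt.continuousWithinAt)
      (fun s _ => (hd s).differentiableAt.differentiableWithinAt) ?_
    intro s hs
    rw [interior_Icc] at hs
    rw [(hd s).deriv]
    have := hle s hs
    have hp := Real.exp_pos (-C * s)
    nlinarith
  have hE0 : E 0 = 0 := by simp [hE, h0]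
  have hEt : E t ≤ 0 := by
    have := hanti (left_mem_Icc.2 (ht.1.trans ht.2)) ht ht.1
    simp only [hE0, zero_mul] at this
    by_contra hcon
    push Not at hcon
    have := mul_pos hcon (Real.exp_pos (-C * t))
    linarith
  by_contra hne
  have hlt : 0 < e (x, t) := lt_of_le_of_ne (hpos _) (Ne.symm hne)
  have := intervalIntegral.integral_pos (f := fun x => e (x, t)) zero_lt_one
    (by fun_prop : Continuous fun x : ℝ => e (x, t)).continuousOn (fun y _ => hpos _) ⟨x, hx, hlt⟩
  simp only [hE] at hEt
  linarith

lemma pointwise_bound (a a0 A k K C w w1 w2 w5 : ℝ) (ha0 : 0 < a0) (h1 : a0 ≤ a) (h2 : a ≤ A)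
    (hk : |k| ≤ K) (hC : C = K ^ 2 / a0 + A + K) :
    -(w5 + w1) * (a * w5 + k * w) ≤ C * (w ^ 2 + w1 ^ 2) := by
  have hK : 0 ≤ K := (abs_nonneg k).trans hk
  have hap : 0 < a := ha0.trans_le h1
  have hk2 : k ^ 2 ≤ K ^ 2 := by
    rw [← sq_abs k]; gcongr
  have e1 : -(k * w * w5) ≤ a / 4 * w5 ^ 2 + k ^ 2 / a * w ^ 2 := by
    have : a / 4 * w5 ^ 2 + k ^ 2 / a * w ^ 2 + k * w * w5 = a * (w5 / 2 + k * w / a) ^ 2 := by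
      field_simp
      ring
    have := mul_nonneg hap.le (sq_nonneg (w5 / 2 + k * w / a))
    linarith
  have e2 : k ^ 2 / a * w ^ 2 ≤ K ^ 2 / a0 * w ^ 2 := by gcongr
  have e3 : -(a * w1 * w5) ≤ a / 2 * w5 ^ 2 + a / 2 * w1 ^ 2 := by
    have := mul_nonneg hap.le (sq_nonneg (w5 + w1))
    nlinarith
  have e4 : a / 2 * w1 ^ 2 ≤ A * w1 ^ 2 := by
    gcongr; linarith
  have e5 : -(k * w * w1) ≤ K * (w ^ 2 + w1 ^ 2) := by
    obtain ⟨l, u⟩ := abs_le.1 hk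
    nlinarith [mul_nonneg (by linarith : 0 ≤ K + k) (sq_nonneg (w + w1)),
      mul_nonneg (by linarith : 0 ≤ K - k) (sq_nonneg (w - w1)),
      mul_nonneg hK (sq_nonneg (w + w1)), mul_nonneg hK (sq_nonneg (w - w1)),
      mul_nonneg (by linarith : 0 ≤ K + k) (sq_nonneg (w - w1)),
      mul_nonneg (by linarith : 0 ≤ K - k) (sq_nonneg (w + w1))]
  have e6 : 0 ≤ a * w5 ^ 2 := by positivity
  have e7 : 0 ≤ A * w ^ 2 := mul_nonneg (by linarith) (sq_nonneg _)
  have e8 : 0 ≤ K ^ 2 / a0 * w1 ^ 2 := by positivity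
  rw [hC]
  nlinarith

/-- uniqueness of strictly positive classical solutions of the
sixth-order thin-film equation, part of the Proposition in Section 4.3.
If `h₁, h₂` are smooth, 1-periodic in `x`, bounded below by positive constants, both
solve `∂ₜh = ∂ₓ(h³((β/12)∂ₓ⁵h − Φ))` on `ℝ×(0,T)`, and have the same initial data,
then `h₁ = h₂` on `ℝ×[0,T]`. -/
theorem stmt_17 (β T : ℝ) (hβ : 0 < β) (hT : 0 < T)
    (Φ : ℝ × ℝ → ℝ) (hΦ : ContDiff ℝ (⊤ : ℕ∞) Φ) (hΦper : ∀ x t, Φ (x + 1, t) = Φ (x, t))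
    (h1 h2 : ℝ × ℝ → ℝ) (h1sm : ContDiff ℝ (⊤ : ℕ∞) h1) (h2sm : ContDiff ℝ (⊤ : ℕ∞) h2)
    (h1per : ∀ x t, h1 (x + 1, t) = h1 (x, t)) (h2per : ∀ x t, h2 (x + 1, t) = h2 (x, t))
    (c1 c2 : ℝ) (hc1 : 0 < c1) (hc2 : 0 < c2)
    (h1lb : ∀ x t : ℝ, t ∈ Icc (0:ℝ) T → c1 ≤ h1 (x, t))
    (h2lb : ∀ x t : ℝ, t ∈ Icc (0:ℝ) T → c2 ≤ h2 (x, t))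
    (hpde1 : ∀ x : ℝ, ∀ t ∈ Ioo (0:ℝ) T,
      pdt h1 (x, t)
        = pdx (fun q => (h1 q) ^ 3 * (β / 12 * (pdx^[5] h1) q - Φ q)) (x, t))
    (hpde2 : ∀ x : ℝ, ∀ t ∈ Ioo (0:ℝ) T,
      pdt h2 (x, t)
        = pdx (fun q => (h2 q) ^ 3 * (β / 12 * (pdx^[5] h2) q - Φ q)) (x, t))
    (hinit : ∀ x : ℝ, h1 (x, 0) = h2 (x, 0)) :
    ∀ x : ℝ, ∀ t ∈ Icc (0:ℝ) T, h1 (x, t) = h2 (x, t) := by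
  set b : ℝ := β / 12 with hb
  have hbpos : 0 < b := by positivity
  -- names for the fluxes
  have f5 : ∀ {f : ℝ × ℝ → ℝ}, ContDiff ℝ (⊤ : ℕ∞) f → ContDiff ℝ (⊤ : ℕ∞) (pdx^[5] f) :=
    fun hf => pdx_smooth (pdx_smooth (pdx_smooth (pdx_smooth (pdx_smooth hf))))
  have p5 : ∀ {f : ℝ × ℝ → ℝ}, ContDiff ℝ (⊤ : ℕ∞) f → (∀ x t, f (x + 1, t) = f (x, t)) →
      ∀ x t, (pdx^[5] f) (x + 1, t) = (pdx^[5] f) (x, t) := by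
    intro f hf hp
    have s1 := pdx_smooth hf
    have s2 := pdx_smooth s1
    have s3 := pdx_smooth s2
    have s4 := pdx_smooth s3
    exact pdx_per s4 (pdx_per s3 (pdx_per s2 (pdx_per s1 (pdx_per hf hp))))
  have g1 := f5 h1sm
  have g2 := f5 h2sm
  have q1 := p5 h1sm h1per
  have q2 := p5 h2sm h2per
  set F1 : ℝ × ℝ → ℝ := fun q => (h1 q) ^ 3 * (b * (pdx^[5] h1) q - Φ q) with hF1
  set F2 : ℝ × ℝ → ℝ := fun q => (h2 q) ^ 3 * (b * (pdx^[5] h2) q - Φ q) with hF2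
  have F1sm : ContDiff ℝ (⊤ : ℕ∞) F1 := (h1sm.pow 3).mul ((contDiff_const.mul g1).sub hΦ)
  have F2sm : ContDiff ℝ (⊤ : ℕ∞) F2 := (h2sm.pow 3).mul ((contDiff_const.mul g2).sub hΦ)
  have F1per : ∀ x t, F1 (x + 1, t) = F1 (x, t) := by
    intro x t; simp only [hF1, h1per, q1, hΦper]
  have F2per : ∀ x t, F2 (x + 1, t) = F2 (x, t) := by
    intro x t; simp only [hF2, h2per, q2, hΦper]
  obtain ⟨F, hF⟩ : ∃ F : ℝ × ℝ → ℝ, F = fun q => F1 q - F2 q := ⟨_, rfl⟩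
  obtain ⟨w, hw⟩ : ∃ w : ℝ × ℝ → ℝ, w = fun q => h1 q - h2 q := ⟨_, rfl⟩
  have Fsm : ContDiff ℝ (⊤ : ℕ∞) F := by rw [hF]; exact F1sm.sub F2sm
  have wsm : ContDiff ℝ (⊤ : ℕ∞) w := by rw [hw]; exact h1sm.sub h2sm
  have Fper : ∀ x t, F (x + 1, t) = F (x, t) := by
    intro x t; simp only [hF, F1per, F2per]
  have wper : ∀ x t, w (x + 1, t) = w (x, t) := by
    intro x t; simp only [hw, h1per, h2per]
  have hpde : ∀ x, ∀ t ∈ Ioo (0:ℝ) T, pdt w (x, t) = pdx F (x, t) := by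
    intro x t ht
    rw [hw, hF, pdt_sub h1sm h2sm, pdx_sub F1sm F2sm]
    simp only [hpde1 x t ht, hpde2 x t ht]
  have hw5 : pdx^[5] w = fun q => (pdx^[5] h1) q - (pdx^[5] h2) q := by
    have a1 := pdx_smooth h1sm
    have a2 := pdx_smooth a1
    have a3 := pdx_smooth a2
    have a4 := pdx_smooth a3
    have b1 := pdx_smooth h2sm
    have b2 := pdx_smooth b1
    have b3 := pdx_smooth b2
    have b4 := pdx_smooth b3
    change pdx (pdx (pdx (pdx (pdx w)))) = _
    rw [hw, pdx_sub h1sm h2sm, pdx_sub a1 b1, pdx_sub a2 b2, pdx_sub a3 b3, pdx_sub a4 b4]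
    rfl
  obtain ⟨k, hk⟩ : ∃ k : ℝ × ℝ → ℝ, k = fun q =>
    ((h1 q) ^ 2 + h1 q * h2 q + (h2 q) ^ 2) * (b * (pdx^[5] h2) q - Φ q) := ⟨_, rfl⟩
  have hFk : ∀ q, F q = b * (h1 q) ^ 3 * (pdx^[5] w) q + k q * w q := by
    intro q
    rw [hw5]
    simp only [hF, hF1, hF2, hk, hw]
    ring
  have kcont : Continuous k := by
    have := g2.continuous
    have := h1sm.continuous
    have := h2sm.continuous
    have := hΦ.continuous
    rw [hk]; fun_prop
  have acont : Continuous fun q => b * (h1 q) ^ 3 := by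
    have := h1sm.continuous
    fun_prop
  have hcpt : IsCompact (Icc (0:ℝ) 1 ×ˢ Icc (0:ℝ) T) := isCompact_Icc.prod isCompact_Icc
  obtain ⟨K, hK⟩ := hcpt.exists_bound_of_continuousOn kcont.continuousOn
  obtain ⟨A, hA⟩ := hcpt.exists_bound_of_continuousOn acont.continuousOn
  have ha0 : 0 < b * c1 ^ 3 := by positivity
  obtain ⟨C, hC⟩ : ∃ C : ℝ, C = K ^ 2 / (b * c1 ^ 3) + A + K := ⟨_, rfl⟩
  have hC0 : 0 ≤ C := by
    have m : ((0:ℝ), (0:ℝ)) ∈ Icc (0:ℝ) 1 ×ˢ Icc (0:ℝ) T :=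
      ⟨⟨le_rfl, zero_le_one⟩, ⟨le_rfl, hT.le⟩⟩
    have := (norm_nonneg _).trans (hK _ m)
    have := (norm_nonneg _).trans (hA _ m)
    rw [hC]; positivity
  -- derivatives of `w`
  have s1 := pdx_smooth wsm
  have s2 := pdx_smooth s1
  have s3 := pdx_smooth s2
  have s4 := pdx_smooth s3
  have s5 := pdx_smooth s4
  have r1 := pdx_per wsm wper
  have r2 := pdx_per s1 r1
  have r3 := pdx_per s2 r2
  have r4 := pdx_per s3 r3
  have v0 := pdt_smooth wsm
  have v1 := pdx_smooth v0
  have u0 := pdt_per wsm wper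
  have u1 := pdx_per v0 u0
  have hcomm : pdt (pdx (pdx w)) = pdx (pdx (pdt w)) := by
    rw [pd_comm s1, pd_comm wsm]
  -- energy density and flux
  obtain ⟨e, he⟩ : ∃ e : ℝ × ℝ → ℝ, e = fun q =>
    (w q * w q + pdx (pdx w) q * pdx (pdx w) q) / 2 := ⟨_, rfl⟩
  obtain ⟨H, hH⟩ : ∃ H : ℝ × ℝ → ℝ, H = fun q =>
    pdx (pdx w) q * pdx (pdt w) q - pdx (pdx (pdx w)) q * pdt w q
      + pdx (pdx (pdx (pdx w))) q * F q + w q * F q + C * (w q * pdx w q) := ⟨_, rfl⟩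
  have esm : ContDiff ℝ (⊤ : ℕ∞) e := by
    rw [he]; exact ((wsm.mul wsm).add (s2.mul s2)).div_const 2
  have Hsm : ContDiff ℝ (⊤ : ℕ∞) H := by
    rw [hH]
    exact ((((s2.mul v1).sub (s3.mul v0)).add (s4.mul Fsm)).add (wsm.mul Fsm)).add
      (contDiff_const.mul (wsm.mul s1))
  have Hper : ∀ x t, H (x + 1, t) = H (x, t) := by
    intro x t; simp only [hH, r1, r2, r3, r4, u0, u1, Fper, wper]
  have het : ∀ x t, pdt e (x, t)
      = w (x, t) * pdt w (x, t) + pdx (pdx w) (x, t) * pdx (pdx (pdt w)) (x, t) := by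
    intro x t
    have d0 := hasDerivAt_t wsm x t
    have d2 := hasDerivAt_t s2 x t
    have := hasDerivAt_t esm x t
    rw [he] at this
    have := this.unique (((d0.mul d0).add (d2.mul d2)).div_const 2)
    rw [he, this, hcomm]
    ring
  have hHx : ∀ x t, pdx H (x, t)
      = pdx (pdx w) (x, t) * pdx (pdx (pdt w)) (x, t)
        - pdx (pdx (pdx (pdx w))) (x, t) * pdt w (x, t)
        + (pdx (pdx (pdx (pdx (pdx w)))) (x, t) + pdx w (x, t)) * F (x, t)
        + (pdx (pdx (pdx (pdx w))) (x, t) + w (x, t)) * pdx F (x, t)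
        + C * (pdx w (x, t) ^ 2 + w (x, t) * pdx (pdx w) (x, t)) := by
    intro x t
    have d0 := hasDerivAt_x wsm x t
    have d1 := hasDerivAt_x s1 x t
    have d2 := hasDerivAt_x s2 x t
    have d3 := hasDerivAt_x s3 x t
    have d4 := hasDerivAt_x s4 x t
    have y0 := hasDerivAt_x v0 x t
    have y1 := hasDerivAt_x v1 x t
    have z := hasDerivAt_x Fsm x t
    have := hasDerivAt_x Hsm x t
    rw [hH] at this
    have := this.unique (((((d2.mul y1).sub (d3.mul y0)).add (d4.mul z)).add (d0.mul z)).add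
      ((d0.mul d1).const_mul C))
    rw [hH, this]
    ring
  have hw0 : ∀ x, w (x, 0) = 0 := by
    intro x; simp only [hw, hinit, sub_self]
  have hz : ∀ {f : ℝ × ℝ → ℝ}, ContDiff ℝ (⊤ : ℕ∞) f → (∀ x, f (x, 0) = 0) →
      ∀ x, pdx f (x, 0) = 0 := by
    intro f hf h0 x
    have := hasDerivAt_x hf x 0
    simp only [h0] at this
    exact this.unique (hasDerivAt_const x (0:ℝ))
  have e0 : ∀ x, e (x, 0) = 0 := by
    intro x
    simp only [he, hw0, hz s1 (hz wsm hw0)]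
    norm_num
  have epos : ∀ q, 0 ≤ e q := by
    intro q
    simp only [he]
    have := mul_self_nonneg (w q)
    have := mul_self_nonneg (pdx (pdx w) q)
    linarith
  have key := energy_zero esm Hsm Hper epos e0 (3 * C) T (by
    intro x hx t ht
    have htc : t ∈ Icc (0:ℝ) T := ⟨ht.1.le, ht.2.le⟩
    have hk' := hK (x, t) ⟨hx, htc⟩
    have hA' := (le_abs_self _).trans (hA (x, t) ⟨hx, htc⟩)
    have hlow : b * c1 ^ 3 ≤ b * (h1 (x, t)) ^ 3 := by
      have := h1lb x t htc
      gcongr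
    have hp := pointwise_bound (b * (h1 (x, t)) ^ 3) (b * c1 ^ 3) A (k (x, t)) K C (w (x, t))
      (pdx w (x, t)) 0 ((pdx^[5] w) (x, t)) ha0 hlow hA' hk' hC
    rw [← hFk] at hp
    change -(pdx (pdx (pdx (pdx (pdx w)))) (x, t) + pdx w (x, t)) * F (x, t) ≤ _ at hp
    rw [het, hHx, hpde x t ht]
    simp only [he]
    nlinarith [mul_nonneg hC0 (sq_nonneg (w (x, t) + pdx (pdx w) (x, t))),
      mul_nonneg hC0 (sq_nonneg (pdx (pdx w) (x, t)))])
  intro x t ht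
  have hper : Function.Periodic (fun x => w (x, t)) 1 := fun x => wper x t
  obtain ⟨y, hy, hxy⟩ := hper.exists_mem_Ico₀ zero_lt_one x
  have hey := key y ⟨hy.1, hy.2.le⟩ t ht
  have hwy : w (y, t) = 0 := by
    simp only [he] at hey
    have := mul_self_nonneg (w (y, t))
    have := mul_self_nonneg (pdx (pdx w) (y, t))
    exact mul_self_eq_zero.1 (by linarith)
  simp only [hwy] at hxy
  rw [hw] at hxy
  exact sub_eq_zero.1 hxy

end
end
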